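/- For all integers n ≥ 1 and k ≥ 0 one has the exact moment formula C(n+k,k)·E[V_n^k] = Σ_{i=1}^{n} Σ_{ℓ=i}^{n+k} (−1)^{ℓ+i}·C(n+k−i,k)·C(n+k,ℓ)·c(i,ℓ). -/

import Mathlib

open MeasureTheory

noncomputable section

/-- The triangle with vertices (0,0), (1,0), (0,1). -/
def T : Set (ℝ × ℝ) := convexHull ℝ {(0, 0), (1, 0), (0, 1)}

/-- The uniform distribution on `T`: twice Lebesgue measure restricted to `T`. -/
def μT : Measure (ℝ × ℝ) := (2 : ENNReal) • (volume.restrict T)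

/-- Joint law of `n` independent uniform points in `T`. -/
def P (n : ℕ) : Measure (Fin n → ℝ × ℝ) := Measure.pi fun _ => μT

/-- The random convex chain: convex hull of the points together with `(1,0)` and `(0,1)`. -/
def Tchain (n : ℕ) (ω : Fin n → ℝ × ℝ) : Set (ℝ × ℝ) :=
  convexHull ℝ (Set.range ω ∪ {(1, 0), (0, 1)})

/-- Normalized area `V_n = 2 vol(T_n)`. -/
def V (n : ℕ) (ω : Fin n → ℝ × ℝ) : ℝ := 2 * (volume (Tchain n ω)).toReal

/-- Number of vertices of `T_n` other than the two corners. -/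
def N (n : ℕ) (ω : Fin n → ℝ × ℝ) : ℕ :=
  (Set.extremePoints ℝ (Tchain n ω)).ncard - 2

/-- Normalized moments `q_{n,k} = C(n+k,k) E[V_n^k]`. -/
def q (n k : ℕ) : ℝ := ((n + k).choose k : ℝ) * ∫ ω, (V n ω) ^ k ∂ P n

/-- Probability generating function of `N_n`. -/
def G (n : ℕ) (t : ℝ) : ℝ := ∫ ω, t ^ (N n ω) ∂ P n

/-- Harmonic number. -/
def H (j : ℕ) : ℝ := ∑ i ∈ Finset.range j, 1 / ((i : ℝ) + 1)

/-- Generalized harmonic number of order 2. -/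
def H2 (j : ℕ) : ℝ := ∑ i ∈ Finset.range j, 1 / ((i : ℝ) + 1) ^ 2

/-- `c(k,ℓ)`: elementary symmetric polynomial `e_k` of `2/(j(j+1))`, `j = 1,…,ℓ`. -/
def c (k l : ℕ) : ℝ :=
  ∑ S ∈ (Finset.Icc 1 l).powersetCard k, ∏ j ∈ S, 2 / ((j : ℝ) * ((j : ℝ) + 1))


/-! ### Algebra -/

theorem c_zero (l : ℕ) : c 0 l = 1 := by simp [c]

theorem c_lt {i l : ℕ} (h : l < i) : c i l = 0 := by
  unfold c
  rw [Finset.powersetCard_eq_empty.2 (by simpa using h)]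
  simp

theorem c_succ (i l : ℕ) :
    c (i + 1) (l + 1) = c (i + 1) l + 2 / (((l : ℝ) + 1) * ((l : ℝ) + 2)) * c i l := by
  unfold c
  have h1 : Finset.Icc 1 (l + 1) = insert (l + 1) (Finset.Icc 1 l) := by
    ext x; simp only [Finset.mem_Icc, Finset.mem_insert]; omega
  have h2 : l + 1 ∉ Finset.Icc 1 l := by simp
  rw [h1, Finset.powersetCard_succ_insert h2, Finset.sum_union]
  · congr 1
    rw [Finset.sum_image, Finset.mul_sum]
    · apply Finset.sum_congr rfl
      intro S hS
      rw [Finset.mem_powersetCard] at hS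
      rw [Finset.prod_insert (fun h => h2 (hS.1 h))]
      push_cast
      ring
    · intro S hS S' hS' h
      simp only [Finset.mem_coe, Finset.mem_powersetCard] at hS hS'
      have := congrArg (fun s => s.erase (l + 1)) h
      simpa [Finset.erase_insert (fun h => h2 (hS.1 h)),
        Finset.erase_insert (fun h => h2 (hS'.1 h))] using this
  · rw [Finset.disjoint_left]
    intro S hS hS'
    rw [Finset.mem_powersetCard] at hS
    rw [Finset.mem_image] at hS'
    obtain ⟨S', _, rfl⟩ := hS'
    exact h2 (hS.1 (Finset.mem_insert_self _ _))

/-- The (conjectural) probability that `N_N = i`. -/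
def pp (N i : ℕ) : ℝ := ∑ l ∈ Finset.range (N + 1), (-1 : ℝ) ^ (l + i) * (N.choose l : ℝ) * c i l

theorem pp_lt {N i : ℕ} (h : N < i) : pp N i = 0 := by
  unfold pp
  apply Finset.sum_eq_zero
  intro l hl
  rw [Finset.mem_range] at hl
  rw [c_lt (by omega), mul_zero]

theorem pp_zero (N : ℕ) : pp N 0 = if N = 0 then 1 else 0 := by
  unfold pp
  have := Int.alternating_sum_range_choose (n := N)
  have h2 : ((∑ m ∈ Finset.range (N + 1), ((-1) ^ m * (N.choose m : ℤ)) : ℤ) : ℝ)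
      = ((if N = 0 then 1 else 0 : ℤ) : ℝ) := by rw [this]
  push_cast at h2
  simpa [c_zero] using h2

theorem sum_choose_weight (N l : ℕ) :
    ∑ M ∈ Finset.range (N + 1), ((N : ℝ) + 1 - M) * (M.choose l : ℝ) = ((N + 2).choose (l + 2) : ℝ) := by
  have hs : ∀ N : ℕ, ∑ M ∈ Finset.range (N + 1), (M.choose l : ℝ) = ((N + 1).choose (l + 1) : ℝ) := by
    intro N
    induction N with
    | zero => cases l <;> simp [Nat.choose_eq_zero_of_lt]
    | succ N ih =>
      rw [Finset.sum_range_succ, ih, Nat.choose_succ_succ (N + 1) l]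
      push_cast; ring
  induction N with
  | zero => cases l <;> simp [Nat.choose_eq_zero_of_lt]
  | succ N ih =>
    rw [Finset.sum_range_succ, Nat.choose_succ_succ (N + 2) (l + 1)]
    push_cast
    rw [← ih, ← hs (N + 1), Finset.sum_range_succ _ (N + 1)]
    have : ∀ M : ℕ, ((N : ℝ) + 1 + 1 - M) * (M.choose l : ℝ)
        = (M.choose l : ℝ) + ((N : ℝ) + 1 - M) * (M.choose l : ℝ) := by intro M; ring
    simp_rw [this]
    rw [Finset.sum_add_distrib]
    ring

theorem abel (N : ℕ) (f : ℕ → ℝ) :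
    ∑ l ∈ Finset.range (N + 2), (-1 : ℝ) ^ l * ((N + 1).choose l : ℝ) * f l
      = ∑ l ∈ Finset.range (N + 1), (-1 : ℝ) ^ l * (N.choose l : ℝ) * (f l - f (l + 1)) := by
  rw [Finset.sum_range_succ']
  have : ∀ l : ℕ, (-1 : ℝ) ^ (l + 1) * ((N + 1).choose (l + 1) : ℝ) * f (l + 1)
      = (-1 : ℝ) ^ (l + 1) * (N.choose (l + 1) : ℝ) * f (l + 1)
        - (-1 : ℝ) ^ l * (N.choose l : ℝ) * f (l + 1) := by
    intro l
    rw [Nat.choose_succ_succ]; push_cast; ring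
  simp_rw [this, mul_sub, Finset.sum_sub_distrib]
  rw [Finset.sum_range_succ (fun l => (-1 : ℝ) ^ (l + 1) * (N.choose (l + 1) : ℝ) * f (l + 1)) N,
    Finset.sum_range_succ' (fun l => (-1 : ℝ) ^ l * (N.choose l : ℝ) * f l) N]
  simp [Nat.choose_succ_self]
  ring

theorem choose_two (N l : ℕ) : (N.choose l : ℝ) * (1 / (((l : ℝ) + 1) * ((l : ℝ) + 2)))
    = 1 / (((N : ℝ) + 1) * ((N : ℝ) + 2)) * ((N + 2).choose (l + 2) : ℝ) := by
  have h1 := Nat.add_one_mul_choose_eq N l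
  have h2 := Nat.add_one_mul_choose_eq (N + 1) (l + 1)
  have h1' : ((N : ℝ) + 1) * (N.choose l) = ((N + 1).choose (l + 1) : ℝ) * (l + 1) := by exact_mod_cast h1
  have h2' : ((N : ℝ) + 1 + 1) * ((N + 1).choose (l + 1)) = ((N + 2).choose (l + 2) : ℝ) * (l + 1 + 1) := by
    exact_mod_cast h2
  field_simp
  linear_combination ((N : ℝ) + 2) * h1' + ((l : ℝ) + 1) * h2'

theorem pp_succ (N i : ℕ) : pp (N + 1) (i + 1) = 2 / (((N : ℝ) + 1) * ((N : ℝ) + 2)) *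
    ∑ M ∈ Finset.range (N + 1), ((N : ℝ) + 1 - M) * pp M i := by
  have e1 : pp (N + 1) (i + 1) = (-1 : ℝ) ^ (i + 1) *
      ∑ l ∈ Finset.range (N + 2), (-1 : ℝ) ^ l * ((N + 1).choose l : ℝ) * c (i + 1) l := by
    unfold pp
    rw [Finset.mul_sum]
    apply Finset.sum_congr rfl
    intro l _
    ring
  have e2 : ∀ M ∈ Finset.range (N + 1), pp M i =
      ∑ l ∈ Finset.range (N + 1), (-1 : ℝ) ^ (l + i) * (M.choose l : ℝ) * c i l := by
    intro M hM
    rw [Finset.mem_range] at hM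
    unfold pp
    apply Finset.sum_subset
    · intro x; simp only [Finset.mem_range]; omega
    · intro x _ hx
      simp only [Finset.mem_range] at hx
      rw [Nat.choose_eq_zero_of_lt (by omega)]; simp
  rw [e1, abel, Finset.sum_congr (s₁ := Finset.range (N + 1)) (f := fun M => ((N : ℝ) + 1 - M) * pp M i) rfl
    (fun M hM => by rw [e2 M hM])]
  simp_rw [Finset.mul_sum]
  rw [Finset.sum_comm]
  apply Finset.sum_congr rfl
  intro l _
  have h3 := choose_two N l
  rw [← sum_choose_weight] at h3
  have : ∑ M ∈ Finset.range (N + 1), 2 / (((N : ℝ) + 1) * ((N : ℝ) + 2)) *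
      (((N : ℝ) + 1 - M) * ((-1 : ℝ) ^ (l + i) * (M.choose l : ℝ) * c i l)) =
      2 * (-1 : ℝ) ^ (l + i) * c i l * (1 / (((N : ℝ) + 1) * ((N : ℝ) + 2)) *
        ∑ M ∈ Finset.range (N + 1), ((N : ℝ) + 1 - M) * (M.choose l : ℝ)) := by
    rw [Finset.mul_sum, Finset.mul_sum]
    apply Finset.sum_congr rfl
    intro M _
    ring
  rw [this, ← h3, c_succ]
  ring

/-- The right-hand side. -/
def RR (n k : ℕ) : ℝ := ∑ i ∈ Finset.range (n + 1), ((n + k - i).choose k : ℝ) * pp (n + k) i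

theorem RR_zero (k : ℕ) : RR 0 k = if k = 0 then 1 else 0 := by
  simp [RR, pp_zero]

theorem vander (n k i M : ℕ) (hi : i ≤ M) (hM : M ≤ n + k) :
    ∑ j ∈ Finset.range (k + 1), ((n + k - M).choose (k - j) : ℝ) * ((M - i).choose j : ℝ)
      = ((n + k - i).choose k : ℝ) := by
  have := Nat.add_choose_eq (M - i) (n + k - M) k
  rw [show M - i + (n + k - M) = n + k - i by omega,
    Finset.Nat.sum_antidiagonal_eq_sum_range_succ_mk] at this
  rw [this]
  push_cast
  apply Finset.sum_congr rfl
  intro j _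
  ring

theorem reidx (n k j : ℕ) (hj : j ≤ k) (f : ℕ → ℝ) (h1 : ∀ M, M < j → f M = 0)
    (h2 : ∀ M, M ≤ n + k → n + j < M → f M = 0) :
    ∑ m ∈ Finset.range (n + 1), f (m + j) = ∑ M ∈ Finset.range (n + k + 1), f M := by
  rw [← Finset.sum_image (s := Finset.range (n + 1)) (g := fun m => m + j) (f := f)]
  · apply Finset.sum_subset
    · intro x
      simp only [Finset.mem_image, Finset.mem_range]
      rintro ⟨m, hm, rfl⟩
      omega
    · intro x hx hx'
      simp only [Finset.mem_image, Finset.mem_range, not_exists, not_and] at hx hx'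
      by_cases h : x < j
      · exact h1 x h
      · apply h2 x (by omega)
        by_contra h3
        exact hx' (x - j) (by omega) (by omega)
  · intro a _ b _ h
    simpa using h

theorem RR_succ (n k : ℕ) : RR (n + 1) k =
    2 / (((n : ℝ) + k + 1) * ((n : ℝ) + k + 2)) *
    ∑ m ∈ Finset.range (n + 1), ∑ j ∈ Finset.range (k + 1),
      ((n : ℝ) + k + 1 - m - j) * ((n - m + (k - j)).choose (k - j) : ℝ) * RR m j := by
  have e1 : RR (n + 1) k = ∑ i ∈ Finset.range (n + 1), ((n + k - i).choose k : ℝ) *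
      pp (n + k + 1) (i + 1) := by
    unfold RR
    rw [Finset.sum_range_succ', pp_zero]
    simp only [show n + 1 + k ≠ 0 by omega, if_false, mul_zero, add_zero]
    apply Finset.sum_congr rfl
    intro i _
    rw [show n + 1 + k - (i + 1) = n + k - i by omega, show n + 1 + k = n + k + 1 by omega]
  have e2 : ∀ m ∈ Finset.range (n + 1), ∀ j ∈ Finset.range (k + 1),
      ((n : ℝ) + k + 1 - m - j) * ((n - m + (k - j)).choose (k - j) : ℝ) * RR m j =
      ∑ i ∈ Finset.range (n + 1), ((n : ℝ) + k + 1 - ((m + j : ℕ) : ℝ)) *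
        ((n + k - (m + j)).choose (k - j) : ℝ) * (((m + j - i).choose j : ℝ) * pp (m + j) i) := by
    intro m hm j hj
    rw [Finset.mem_range] at hm hj
    rw [← Finset.mul_sum, show n + k - (m + j) = n - m + (k - j) by omega]
    congr 1
    · push_cast; ring
    · unfold RR
      apply Finset.sum_subset
      · intro x; simp only [Finset.mem_range]; omega
      · intro i _ hi
        simp only [Finset.mem_range] at hi
        by_cases h : i ≤ m + j
        · rw [Nat.choose_eq_zero_of_lt (by omega)]; simp
        · rw [pp_lt (by omega), mul_zero]
  rw [e1, Finset.sum_congr rfl (fun m hm => Finset.sum_congr rfl (fun j hj => e2 m hm j hj))]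
  simp_rw [pp_succ]
  have e3 : ∀ i ∈ Finset.range (n + 1),
      ∑ M ∈ Finset.range (n + k + 1), ((n : ℝ) + k + 1 - M) * ((n + k - i).choose k : ℝ) * pp M i
      = ∑ m ∈ Finset.range (n + 1), ∑ j ∈ Finset.range (k + 1),
        ((n : ℝ) + k + 1 - ((m + j : ℕ) : ℝ)) *
        ((n + k - (m + j)).choose (k - j) : ℝ) * (((m + j - i).choose j : ℝ) * pp (m + j) i) := by
    intro i hi
    rw [Finset.mem_range] at hi
    rw [Finset.sum_comm (s := Finset.range (n + 1))]
    rw [Finset.sum_congr rfl (fun j hj => reidx n k j (by simpa [Nat.lt_succ_iff] using hj)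
      (fun M => ((n : ℝ) + k + 1 - (M : ℝ)) *
        ((n + k - M).choose (k - j) : ℝ) * (((M - i).choose j : ℝ) * pp M i)) ?_ ?_)]
    · rw [Finset.sum_comm]
      apply Finset.sum_congr rfl
      intro M hM
      rw [Finset.mem_range] at hM
      by_cases h : i ≤ M
      · rw [← vander n k i M h (by omega), Finset.mul_sum, Finset.sum_mul]
        apply Finset.sum_congr rfl
        intro j _
        ring
      · simp [pp_lt (not_le.1 h)]
    · intro M hM
      by_cases h : i ≤ M
      · rw [Nat.choose_eq_zero_of_lt (show M - i < j by omega)]; simp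
      · simp [pp_lt (not_le.1 h)]
    · intro M hM hM'
      rw [Finset.mem_range] at hj
      rw [Nat.choose_eq_zero_of_lt (show n + k - M < k - j by omega)]; simp
  have e4 : ∑ m ∈ Finset.range (n + 1), ∑ j ∈ Finset.range (k + 1),
      ∑ i ∈ Finset.range (n + 1), ((n : ℝ) + k + 1 - ((m + j : ℕ) : ℝ)) *
        ((n + k - (m + j)).choose (k - j) : ℝ) * (((m + j - i).choose j : ℝ) * pp (m + j) i)
      = ∑ i ∈ Finset.range (n + 1), ∑ M ∈ Finset.range (n + k + 1),
        ((n : ℝ) + k + 1 - M) * ((n + k - i).choose k : ℝ) * pp M i := by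
    rw [Finset.sum_congr rfl e3, Finset.sum_comm (s := Finset.range (n + 1))
      (t := Finset.range (n + 1))]
    apply Finset.sum_congr rfl
    intro m _
    rw [Finset.sum_comm]
  rw [e4, Finset.mul_sum]
  apply Finset.sum_congr rfl
  intro i _
  push_cast
  rw [Finset.mul_sum, Finset.mul_sum, Finset.mul_sum]
  apply Finset.sum_congr rfl
  intro M _
  ring

/-- Algebraic conclusion: a moment array with the right recursion is given by `RR`. -/
theorem alg_main (Mo : ℕ → ℕ → ℝ) (h0 : ∀ k, Mo 0 k = if k = 0 then 1 else 0)
    (hs : ∀ n k, Mo (n + 1) k = ((n : ℝ) + 1) * ∑ m ∈ Finset.range (n + 1),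
      ∑ j ∈ Finset.range (k + 1), (n.choose m : ℝ) * (k.choose j : ℝ) * Mo m j *
        (2 / ((n : ℝ) + k + 1) * (((n - m + (k - j) + 1).factorial : ℝ) * ((m + j).factorial : ℝ)
          / ((n + k + 2).factorial : ℝ)))) (n k : ℕ) :
    ((n + k).choose k : ℝ) * Mo n k = RR n k := by
  induction n using Nat.strong_induction_on generalizing k with
  | _ n ih =>
  cases n with
  | zero => rw [h0, RR_zero]; simp
  | succ n =>
  rw [RR_succ, hs]
  simp_rw [Finset.mul_sum]
  apply Finset.sum_congr rfl
  intro m hm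
  apply Finset.sum_congr rfl
  intro j hj
  rw [Finset.mem_range] at hm hj
  rw [← ih m hm j]
  obtain ⟨a, rfl⟩ : ∃ a, n = m + a := ⟨n - m, by omega⟩
  obtain ⟨b, rfl⟩ : ∃ b, k = j + b := ⟨k - j, by omega⟩
  rw [show m + a - m = a by omega, show j + b - j = b by omega]
  rw [Nat.cast_choose ℝ (show j + b ≤ m + a + 1 + (j + b) by omega),
    Nat.cast_choose ℝ (show m ≤ m + a by omega), Nat.cast_choose ℝ (show j ≤ j + b by omega),
    Nat.cast_choose ℝ (show b ≤ a + b by omega), Nat.cast_choose ℝ (show j ≤ m + j by omega),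
    show m + a + 1 + (j + b) - (j + b) = m + a + 1 by omega, show m + a - m = a by omega,
    show j + b - j = b by omega, show a + b - b = a by omega, show m + j - j = m by omega,
    show m + a + 1 + (j + b) = (m + a + (j + b)) + 1 by omega]
  simp only [Nat.factorial_succ, show m + a + (j + b) + 2 = (m + a + (j + b) + 1) + 1 by omega]
  have := fun n => (Nat.cast_ne_zero (R := ℝ)).2 (Nat.factorial_ne_zero n)
  have f1 := this (m + a)
  have f2 := this (j + b)
  have f3 := this (m + a + (j + b))
  have f4 := this m
  have f5 := this j
  have f6 := this a
  have f7 := this b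
  have f8 := this (m + j)
  have f9 := this (a + b)
  push_cast
  have g1 : (m : ℝ) + a + 1 ≠ 0 := by positivity
  have g2 : (m : ℝ) + a + (j + b) + 1 ≠ 0 := by positivity
  have g3 : (m : ℝ) + a + (j + b) + 1 + 1 ≠ 0 := by positivity
  have g4 : (m : ℝ) + a + (j + b) + 2 ≠ 0 := by positivity
  field_simp
  ring

theorem RR_eq (n k : ℕ) (hn : 1 ≤ n) : RR n k = ∑ i ∈ Finset.Icc 1 n, ∑ l ∈ Finset.Icc i (n + k),
          (-1 : ℝ) ^ (l + i) * ((n + k - i).choose k : ℝ) * ((n + k).choose l : ℝ) * c i l := by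
  unfold RR
  have h1 : Finset.range (n + 1) = insert 0 (Finset.Icc 1 n) := by
    ext x; simp only [Finset.mem_range, Finset.mem_insert, Finset.mem_Icc]; omega
  rw [h1, Finset.sum_insert (by simp), pp_zero, if_neg (by omega), mul_zero, zero_add]
  apply Finset.sum_congr rfl
  intro i hi
  unfold pp
  rw [Finset.mul_sum]
  symm
  trans ∑ l ∈ Finset.range (n + k + 1),
    (-1 : ℝ) ^ (l + i) * ((n + k - i).choose k : ℝ) * ((n + k).choose l : ℝ) * c i l
  · apply Finset.sum_subset
    · intro x; simp only [Finset.mem_Icc, Finset.mem_range]; omega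
    · intro x hx hx'
      simp only [Finset.mem_Icc, Finset.mem_range] at hx hx'
      rw [c_lt (by omega), mul_zero]
  · apply Finset.sum_congr rfl
    intro l _
    ring

/-! ### Geometry -/

theorem mem_T (p : ℝ × ℝ) : p ∈ T ↔ 0 ≤ p.1 ∧ 0 ≤ p.2 ∧ p.1 + p.2 ≤ 1 := by
  constructor
  · intro hp
    have hc : Convex ℝ {p : ℝ × ℝ | 0 ≤ p.1 ∧ 0 ≤ p.2 ∧ p.1 + p.2 ≤ 1} := by
      rintro ⟨a, b⟩ ⟨h1, h2, h3⟩ ⟨a', b'⟩ ⟨h1', h2', h3'⟩ s t hs ht hst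
      simp only at h1 h2 h3 h1' h2' h3'
      refine ⟨?_, ?_, ?_⟩
      · simp; positivity
      · simp; positivity
      · simp
        nlinarith [mul_le_mul_of_nonneg_left h3 hs, mul_le_mul_of_nonneg_left h3' ht]
    refine convexHull_min ?_ hc hp
    rintro x (rfl | rfl | rfl) <;> norm_num
  · rintro ⟨h1, h2, h3⟩
    have hc := convex_convexHull ℝ ({(0, 0), (1, 0), (0, 1)} : Set (ℝ × ℝ))
    have m0 : ((0, 0) : ℝ × ℝ) ∈ T := subset_convexHull ℝ _ (by simp)
    have m1 : ((1, 0) : ℝ × ℝ) ∈ T := subset_convexHull ℝ _ (by simp)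
    have m2 : ((0, 1) : ℝ × ℝ) ∈ T := subset_convexHull ℝ _ (by simp)
    have := hc.sum_mem (t := Finset.univ) (w := ![1 - p.1 - p.2, p.1, p.2])
      (z := ![((0, 0) : ℝ × ℝ), (1, 0), (0, 1)]) (by
        intro i _; fin_cases i <;> simp <;> linarith) (by simp [Fin.sum_univ_three]; ring) (by
        intro i _; fin_cases i; exacts [m0, m1, m2])
    rw [T]
    simpa [Fin.sum_univ_three] using this

theorem T_closed : IsClosed T := by
  have : T = {p : ℝ × ℝ | 0 ≤ p.1} ∩ {p : ℝ × ℝ | 0 ≤ p.2} ∩ {p : ℝ × ℝ | p.1 + p.2 ≤ 1} := by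
    ext p; rw [mem_T]; simp [and_assoc]
  rw [this]
  refine IsClosed.inter (IsClosed.inter ?_ ?_) ?_
  · exact isClosed_le (by fun_prop) (by fun_prop)
  · exact isClosed_le (by fun_prop) (by fun_prop)
  · exact isClosed_le (by fun_prop) (by fun_prop)

theorem T_meas : MeasurableSet T := T_closed.measurableSet

theorem T_convex : Convex ℝ T := convex_convexHull ℝ _

theorem line_null (α β γ : ℝ) (h : α ≠ 0 ∨ β ≠ 0) :
    volume {p : ℝ × ℝ | α * p.1 + β * p.2 = γ} = 0 := by
  have hm : MeasurableSet {p : ℝ × ℝ | α * p.1 + β * p.2 = γ} :=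
    (isClosed_eq (by fun_prop) (by fun_prop)).measurableSet
  rw [Measure.volume_eq_prod, Measure.measure_prod_null hm]
  by_cases hb : β = 0
  · have ha : α ≠ 0 := by tauto
    have : ∀ᵐ x : ℝ, x ≠ γ / α := by
      rw [ae_iff]; simp
    filter_upwards [this] with x hx
    have : (Prod.mk x ⁻¹' {p : ℝ × ℝ | α * p.1 + β * p.2 = γ}) = ∅ := by
      ext y
      simp only [Set.mem_preimage, Set.mem_ofPred_eq, Set.mem_empty_iff_false, iff_false, hb]
      intro h
      apply hx
      field_simp
      linarith
    rw [this]; simp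
  · refine Filter.Eventually.of_forall fun x => ?_
    apply measure_mono_null (t := {(γ - α * x) / β})
    · intro y hy
      simp only [Set.mem_preimage, Set.mem_ofPred_eq] at hy
      simp only [Set.mem_singleton_iff]
      field_simp
      linarith
    · simp

/-- A planar affine map in coordinates. -/
def aff (e f a b a₂ b₂ : ℝ) : (ℝ × ℝ) →ᵃ[ℝ] (ℝ × ℝ) :=
  (Matrix.toLin (Module.Basis.finTwoProd ℝ) (Module.Basis.finTwoProd ℝ) !![a, b; a₂, b₂]).toAffineMap
    + AffineMap.const ℝ (ℝ × ℝ) (e, f)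

theorem aff_apply (e f a b a₂ b₂ : ℝ) (p : ℝ × ℝ) :
    aff e f a b a₂ b₂ p = (a * p.1 + b * p.2 + e, a₂ * p.1 + b₂ * p.2 + f) := by
  simp [aff, Matrix.toLin_finTwoProd_apply]

theorem aff_cont (e f a b a₂ b₂ : ℝ) : Continuous (aff e f a b a₂ b₂) := by
  have : (aff e f a b a₂ b₂ : ℝ × ℝ → ℝ × ℝ) =
      fun p => (a * p.1 + b * p.2 + e, a₂ * p.1 + b₂ * p.2 + f) := by
    funext p; exact aff_apply _ _ _ _ _ _ p
  rw [this]; fun_prop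

theorem aff_vol (e f a b a₂ b₂ : ℝ) (s : Set (ℝ × ℝ)) :
    volume (aff e f a b a₂ b₂ '' s) = ENNReal.ofReal |a * b₂ - b * a₂| * volume s := by
  have : (aff e f a b a₂ b₂ '' s) = (fun p => p + (e, f)) ''
      ((Matrix.toLin (Module.Basis.finTwoProd ℝ) (Module.Basis.finTwoProd ℝ) !![a, b; a₂, b₂]) '' s) := by
    rw [Set.image_image]; rfl
  rw [this, Set.image_add_right, measure_preimage_add_right, Measure.addHaar_image_linearMap,
    LinearMap.det_toLin, Matrix.det_fin_two_of]

/-- The points of `T` to the right of the line through `(0,1)` and `X`. -/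
def DD (X : ℝ × ℝ) : Set (ℝ × ℝ) := {p | p ∈ T ∧ X.1 * (1 - p.2) ≤ p.1 * (1 - X.2)}

/-- The part of `DD X` below the line through `X` and `(1,0)`. -/
def BB (X : ℝ × ℝ) : Set (ℝ × ℝ) := {p | p ∈ DD X ∧ p.2 * (1 - X.1) ≤ X.2 * (1 - p.1)}

/-- The part of `DD X` strictly above the line through `X` and `(1,0)`. -/
def AA (X : ℝ × ℝ) : Set (ℝ × ℝ) := {p | p ∈ DD X ∧ X.2 * (1 - p.1) < p.2 * (1 - X.1)}

/-- The closed version of `AA X`. -/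
def AC (X : ℝ × ℝ) : Set (ℝ × ℝ) := {p | p ∈ DD X ∧ X.2 * (1 - p.1) ≤ p.2 * (1 - X.1)}

def phi (z y : ℝ) : (ℝ × ℝ) →ᵃ[ℝ] (ℝ × ℝ) := aff z 0 (1 - z) (-(z * y)) 0 y

def psi (z y : ℝ) : (ℝ × ℝ) →ᵃ[ℝ] (ℝ × ℝ) :=
  aff (z * (1 - y)) y (1 - z * (1 - y)) (-(z * (1 - y))) (-y) (1 - y)

theorem phi_vol {z y : ℝ} (hz : z ∈ Set.Ioo (0 : ℝ) 1) (hy : y ∈ Set.Ioo (0 : ℝ) 1) (s : Set (ℝ × ℝ)) :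
    volume (phi z y '' s) = ENNReal.ofReal (y * (1 - z)) * volume s := by
  obtain ⟨hz0, hz1⟩ := hz
  obtain ⟨hy0, hy1⟩ := hy
  unfold phi
  rw [aff_vol, show (1 - z) * y - -(z * y) * 0 = y * (1 - z) by ring, abs_of_pos]
  exact mul_pos hy0 (by linarith)

theorem psi_vol {z y : ℝ} (hz : z ∈ Set.Ioo (0 : ℝ) 1) (hy : y ∈ Set.Ioo (0 : ℝ) 1) (s : Set (ℝ × ℝ)) :
    volume (psi z y '' s) = ENNReal.ofReal ((1 - z) * (1 - y)) * volume s := by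
  obtain ⟨hz0, hz1⟩ := hz
  obtain ⟨hy0, hy1⟩ := hy
  unfold psi
  rw [aff_vol, show (1 - z * (1 - y)) * (1 - y) - -(z * (1 - y)) * -y = (1 - z) * (1 - y) by ring,
    abs_of_pos]
  exact mul_pos (by linarith) (by linarith)

theorem phi_image {z y : ℝ} (hz : z ∈ Set.Ioo (0 : ℝ) 1) (hy : y ∈ Set.Ioo (0 : ℝ) 1) :
    phi z y '' T = BB (z * (1 - y), y) := by
  obtain ⟨hz0, hz1⟩ := hz
  obtain ⟨hy0, hy1⟩ := hy
  have z1 : 0 < 1 - z := by linarith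
  have y1 : 0 < 1 - y := by linarith
  ext p
  simp only [BB, DD, Set.mem_image, mem_T, Set.mem_ofPred_eq, phi, aff_apply]
  constructor
  · rintro ⟨⟨u, v⟩, ⟨hu, hv, huv⟩, rfl⟩
    simp only at hu hv huv ⊢
    have hw : 0 ≤ 1 - u - v := by linarith
    refine ⟨⟨⟨?_, ?_, ?_⟩, ?_⟩, ?_⟩
    · have : 0 ≤ u + z * (1 - u - v) + z * (1 - y) * v := by positivity
      linarith
    · have := mul_nonneg hy0.le hv
      linarith
    · have : 0 ≤ (1 - z) * (1 - u - v) + (1 - y) * (1 - z) * v := by positivity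
      linarith
    · have : 0 ≤ (1 - z) * u * (1 - y) := by positivity
      linarith
    · have : 0 ≤ y * (1 - z) * (1 - u - v) := by positivity
      linarith
  · rintro ⟨⟨⟨h1, h2, h3⟩, h4⟩, h5⟩
    have h4' : 0 ≤ p.1 - z * (1 - p.2) := by
      by_contra hcon
      push Not at hcon
      nlinarith [mul_pos_of_neg_of_neg hcon (neg_lt_zero.2 y1)]
    refine ⟨((p.1 - z + z * p.2) / (1 - z), p.2 / y), ⟨?_, ?_, ?_⟩, ?_⟩
    · exact div_nonneg (by linarith) z1.le
    · exact div_nonneg h2 hy0.le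
    · rw [div_add_div _ _ z1.ne' hy0.ne', div_le_one (by positivity)]
      linarith
    · ext
      · simp only; field_simp; ring
      · simp only; field_simp; ring

theorem psi_image {z y : ℝ} (hz : z ∈ Set.Ioo (0 : ℝ) 1) (hy : y ∈ Set.Ioo (0 : ℝ) 1) :
    psi z y '' T = AC (z * (1 - y), y) := by
  obtain ⟨hz0, hz1⟩ := hz
  obtain ⟨hy0, hy1⟩ := hy
  have z1 : 0 < 1 - z := by linarith
  have y1 : 0 < 1 - y := by linarith
  ext p
  simp only [AC, DD, Set.mem_image, mem_T, Set.mem_ofPred_eq, psi, aff_apply]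
  constructor
  · rintro ⟨⟨u, v⟩, ⟨hu, hv, huv⟩, rfl⟩
    simp only at hu hv huv ⊢
    have hw : 0 ≤ 1 - u - v := by linarith
    refine ⟨⟨⟨?_, ?_, ?_⟩, ?_⟩, ?_⟩
    · have : 0 ≤ u + z * (1 - y) * (1 - u - v) := by positivity
      linarith
    · have : 0 ≤ v + y * (1 - u - v) := by positivity
      linarith
    · have : 0 ≤ (1 - u - v) * ((1 - z) * (1 - y)) := by positivity
      linarith
    · have : 0 ≤ (1 - y) * u * ((1 - z) * (1 - y)) := by positivity
      have : 0 ≤ u * ((1 - z) * (1 - y)) := by positivity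
      linarith
    · have : 0 ≤ v * ((1 - z) * (1 - y)) := by positivity
      linarith
  · rintro ⟨⟨⟨h1, h2, h3⟩, h4⟩, h5⟩
    have h4' : 0 ≤ p.1 - z * (1 - p.2) := by
      by_contra hcon
      push Not at hcon
      nlinarith [mul_pos_of_neg_of_neg hcon (neg_lt_zero.2 y1)]
    refine ⟨((p.1 - z * (1 - p.2)) / (1 - z),
      (p.2 * (1 - z * (1 - y)) - y * (1 - p.1)) / ((1 - z) * (1 - y))), ⟨?_, ?_, ?_⟩, ?_⟩
    · exact div_nonneg (by linarith) z1.le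
    · refine div_nonneg ?_ (by positivity)
      linarith
    · simp only
      rw [div_add_div _ _ z1.ne' (by positivity), div_le_one (by positivity)]
      have : 0 ≤ (1 - z) * (1 - p.1 - p.2) := mul_nonneg z1.le (by linarith)
      have : 0 ≤ (1 - z) * ((1 - z) * (1 - p.1 - p.2)) := mul_nonneg z1.le this
      linarith
    · ext
      · simp only; field_simp; ring
      · simp only; field_simp; ring

theorem DD_convex (X : ℝ × ℝ) : Convex ℝ (DD X) := by
  rintro p ⟨hp, hp'⟩ q ⟨hq, hq'⟩ s t hs ht hst
  refine ⟨T_convex hp hq hs ht hst, ?_⟩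
  have e1 := mul_le_mul_of_nonneg_left hp' hs
  have e2 := mul_le_mul_of_nonneg_left hq' ht
  simp
  obtain rfl : t = 1 - s := by linarith
  linarith

/-- Gluing two convex pieces along a line. -/
theorem glue {D A K : Set (ℝ × ℝ)} (α β γ : ℝ) (hD : Convex ℝ D)
    (hA : A = {p | p ∈ D ∧ 0 ≤ α * p.1 + β * p.2 + γ})
    (hK : Convex ℝ K) (hKD : K ⊆ D) (hKn : ∀ p ∈ K, α * p.1 + β * p.2 + γ ≤ 0)
    (hl : ∀ p ∈ D, α * p.1 + β * p.2 + γ = 0 → p ∈ K) : Convex ℝ (A ∪ K) := by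
  have hAc : Convex ℝ A := by
    rw [hA]
    rintro p ⟨hp, hp'⟩ q ⟨hq, hq'⟩ s t hs ht hst
    refine ⟨hD hp hq hs ht hst, ?_⟩
    have e1 := mul_nonneg hs hp'
    have e2 := mul_nonneg ht hq'
    simp
    obtain rfl : t = 1 - s := by linarith
    linarith
  have key : ∀ a ∈ A, ∀ b ∈ K, segment ℝ a b ⊆ A ∪ K := by
    intro a ha b hb
    have haA := ha
    rw [hA] at ha
    obtain ⟨haD, ha0⟩ := ha
    have hbD := hKD hb
    have hb0 := hKn b hb
    rintro x ⟨s, t, hs, ht, hst, rfl⟩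
    have hxD : s • a + t • b ∈ D := hD haD hbD hs ht hst
    obtain rfl : t = 1 - s := by linarith
    set ga := α * a.1 + β * a.2 + γ with hga
    set gb := α * b.1 + β * b.2 + γ with hgb
    by_cases hx : 0 ≤ α * (s • a + (1 - s) • b).1 + β * (s • a + (1 - s) • b).2 + γ
    · left; rw [hA]; exact ⟨hxD, hx⟩
    · right
      push Not at hx
      have hgx : α * (s • a + (1 - s) • b).1 + β * (s • a + (1 - s) • b).2 + γ
          = s * ga + (1 - s) * gb := by
        simp only [hga, hgb, Prod.fst_add, Prod.snd_add, Prod.smul_fst, Prod.smul_snd, smul_eq_mul]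
        ring
      rw [hgx] at hx
      have hlt : 0 < ga - gb := by
        by_contra hcon
        have : ga = 0 := by linarith
        have : gb = 0 := by linarith
        rw [‹ga = 0›, ‹gb = 0›] at hx
        simp at hx
      -- crossing point parameter
      set r := -gb / (ga - gb) with hr
      have hr0 : 0 ≤ r := div_nonneg (by linarith) hlt.le
      have hr1 : r ≤ 1 := by rw [hr, div_le_one hlt]; linarith
      have hrm : r * (ga - gb) = -gb := by rw [hr]; field_simp
      have hc : r • a + (1 - r) • b ∈ K := by
        apply hl _ (hD haD hbD hr0 (by linarith) (by ring))
        have : α * (r • a + (1 - r) • b).1 + β * (r • a + (1 - r) • b).2 + γ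
          = r * ga + (1 - r) * gb := by
          simp [hga, hgb]; ring
        rw [this]; linarith
      have hsr : s < r := by
        by_contra hcon
        push Not at hcon
        nlinarith [mul_le_mul_of_nonneg_right hcon hlt.le]
      have hrpos : 0 < r := by linarith
      have : s • a + (1 - s) • b = (s / r) • (r • a + (1 - r) • b) + (1 - s / r) • b := by
        ext
        · simp; field_simp; ring
        · simp; field_simp; ring
      rw [this]
      apply hK hc hb (by positivity) _ (by ring)
      have : s / r ≤ 1 := by rw [div_le_one hrpos]; exact hsr.le
      linarith
  rw [convex_iff_segment_subset]
  rintro a (ha | ha) b (hb | hb)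
  · exact (convex_iff_segment_subset.1 hAc ha hb).trans Set.subset_union_left
  · exact key a ha b hb
  · rw [segment_symm]; exact key b hb a ha
  · exact (convex_iff_segment_subset.1 hK ha hb).trans Set.subset_union_right

/-- Hull of a set together with the two corners. -/
def hull (s : Set (ℝ × ℝ)) : Set (ℝ × ℝ) := convexHull ℝ (s ∪ {(1, 0), (0, 1)})

theorem hull_subset_T {s : Set (ℝ × ℝ)} (hs : s ⊆ T) : hull s ⊆ T := by
  apply convexHull_min _ T_convex
  rintro x (hx | rfl | rfl)
  · exact hs hx
  · rw [mem_T]; norm_num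
  · rw [mem_T]; norm_num

theorem hull_decomp {z y : ℝ} (hz : z ∈ Set.Ioo (0 : ℝ) 1) (hy : y ∈ Set.Ioo (0 : ℝ) 1)
    {s t : Set (ℝ × ℝ)} (hs : s ⊆ T) (ht : t ⊆ AC (z * (1 - y), y)) :
    hull (insert (z * (1 - y), y) (phi z y '' s ∪ t)) = AC (z * (1 - y), y) ∪ phi z y '' hull s := by
  have hB : phi z y '' hull s ⊆ BB (z * (1 - y), y) := by
    rw [← phi_image hz hy]; exact Set.image_mono (hull_subset_T hs)
  have hAC : AC (z * (1 - y), y) = convexHull ℝ {(z * (1 - y), y), (1, 0), (0, 1)} := by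
    rw [← psi_image hz hy, T, AffineMap.image_convexHull]
    congr 1
    simp [Set.image_insert_eq, psi, aff_apply]
  have hK : phi z y '' hull s = convexHull ℝ (phi z y '' s ∪ {(1, 0), (z * (1 - y), y)}) := by
    rw [hull, AffineMap.image_convexHull, Set.image_union]
    congr 2
    simp [Set.image_insert_eq, phi, aff_apply]
    congr 2
    ring_nf
  apply Set.Subset.antisymm
  · apply convexHull_min
    · have hm : ∀ x ∈ ({(z * (1 - y), y), (1, 0), (0, 1)} : Set (ℝ × ℝ)),
          x ∈ AC (z * (1 - y), y) ∪ phi z y '' hull s := by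
        intro x hx; left; rw [hAC]; exact subset_convexHull ℝ _ hx
      rintro x ((rfl | hx | hx) | rfl | rfl)
      · exact hm _ (by simp)
      · right; exact Set.image_mono ((Set.subset_union_left).trans (subset_convexHull ℝ _)) hx
      · left; exact ht hx
      · exact hm _ (by simp)
      · exact hm _ (by simp)
    · apply glue (D := DD (z * (1 - y), y)) y (1 - z * (1 - y)) (-y) (DD_convex _)
      · ext p
        simp only [AC, Set.mem_ofPred_eq]
        refine and_congr_right fun _ => ⟨fun h => by linarith, fun h => by linarith⟩
      · rw [hK]; exact convex_convexHull ℝ _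
      · exact fun p hp => (hB hp).1
      · intro p hp
        have := (hB hp).2
        simp only at this
        linarith
      · rintro p ⟨hpT, hp⟩ hp0
        simp only at hp
        obtain ⟨hz0, hz1⟩ := hz
        obtain ⟨hy0, hy1⟩ := hy
        have y1 : 0 < 1 - y := by linarith
        have z1 : 0 < 1 - z := by linarith
        rw [mem_T] at hpT
        obtain ⟨h1, h2, h3⟩ := hpT
        -- p = a • (1,0) + b • X
        have h4 : 0 ≤ p.1 - z * (1 - p.2) := by
          by_contra hcon
          push Not at hcon
          nlinarith [mul_pos_of_neg_of_neg hcon (neg_lt_zero.2 y1)]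
        have hb : p.2 / y ≤ 1 := by
          rw [div_le_one hy0]
          have : (1 - z) * p.2 ≤ (1 - z) * y := by nlinarith [mul_nonneg hy0.le h4]
          exact le_of_mul_le_mul_left this z1
        have : p = (1 - p.2 / y) • ((1, 0) : ℝ × ℝ) + (p.2 / y) • ((z * (1 - y), y) : ℝ × ℝ) := by
          ext
          · simp; field_simp; linarith
          · simp; field_simp
        rw [this, hK]
        apply convex_convexHull ℝ
        · exact subset_convexHull ℝ _ (by simp)
        · exact subset_convexHull ℝ _ (by simp)
        · linarith
        · positivity
        · ring
  · apply Set.union_subset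
    · rw [hAC]
      apply convexHull_mono
      rintro x (rfl | rfl | rfl) <;> simp
    · rw [hK]
      apply convexHull_min _ (convex_convexHull ℝ _)
      rintro x (hx | rfl | rfl)
      · exact subset_convexHull ℝ _ (by left; right; left; exact hx)
      · exact subset_convexHull ℝ _ (by simp)
      · exact subset_convexHull ℝ _ (by simp)

/-! ### Integrals over the triangle -/

theorem beta_int (a b : ℕ) : ∫ y in (0 : ℝ)..1, (1 - y) ^ a * y ^ b =
    (a.factorial : ℝ) * (b.factorial : ℝ) / ((a + b + 1).factorial : ℝ) := by
  induction a generalizing b with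
  | zero =>
    simp [Nat.factorial_succ]
    have : (b.factorial : ℝ) ≠ 0 := by exact_mod_cast Nat.factorial_ne_zero b
    field_simp
  | succ a ih =>
    have hu : ∀ x ∈ Set.uIcc (0 : ℝ) 1, HasDerivAt (fun y : ℝ => (1 - y) ^ (a + 1))
        (-(((a : ℝ) + 1) * (1 - x) ^ a)) x := by
      intro x _
      have := ((hasDerivAt_id x).const_sub 1).pow (a + 1)
      convert! this using 1
      simp
    have hv : ∀ x ∈ Set.uIcc (0 : ℝ) 1, HasDerivAt (fun y : ℝ => y ^ (b + 1) / ((b : ℝ) + 1))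
        (x ^ b) x := by
      intro x _
      have := (hasDerivAt_pow (b + 1) x).div_const ((b : ℝ) + 1)
      convert! this using 1
      have : (b : ℝ) + 1 ≠ 0 := by positivity
      push_cast
      field_simp
    rw [intervalIntegral.integral_mul_deriv_eq_deriv_mul hu hv
      (Continuous.intervalIntegrable (by fun_prop) _ _)
      (Continuous.intervalIntegrable (by fun_prop) _ _)]
    have : ∀ x : ℝ, -(((a : ℝ) + 1) * (1 - x) ^ a) * (x ^ (b + 1) / ((b : ℝ) + 1))
      = (-((a : ℝ) + 1) / ((b : ℝ) + 1)) * ((1 - x) ^ a * x ^ (b + 1)) := by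
      intro x; ring
    simp_rw [this]
    rw [intervalIntegral.integral_const_mul, ih]
    rw [show a + (b + 1) + 1 = a + 1 + b + 1 by ring, Nat.factorial_succ a, Nat.factorial_succ b]
    have : (b : ℝ) + 1 ≠ 0 := by positivity
    have : ((a + 1 + b + 1).factorial : ℝ) ≠ 0 := by exact_mod_cast Nat.factorial_ne_zero _
    push_cast
    simp
    field_simp
    ring

theorem lint_T (f : ℝ × ℝ → ENNReal) (hf : Measurable f) : ∫⁻ X, f X ∂μT =
    2 * ∫⁻ y in Set.Icc (0 : ℝ) 1, ∫⁻ x in Set.Icc (0 : ℝ) (1 - y), f (x, y) := by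
  unfold μT
  rw [lintegral_smul_measure, ← lintegral_indicator T_meas, Measure.volume_eq_prod,
    lintegral_prod_symm _ ((hf.indicator T_meas).aemeasurable), smul_eq_mul,
    ← lintegral_indicator measurableSet_Icc]
  congr 1
  apply lintegral_congr
  intro y
  by_cases hy : y ∈ Set.Icc (0 : ℝ) 1
  · rw [Set.indicator_of_mem hy, ← lintegral_indicator measurableSet_Icc]
    apply lintegral_congr
    intro x
    have : (x, y) ∈ T ↔ x ∈ Set.Icc (0 : ℝ) (1 - y) := by
      rw [mem_T]; simp only [Set.mem_Icc]
      exact ⟨fun h => ⟨h.1, by linarith [h.2.2]⟩, fun h => ⟨h.1, hy.1, by linarith [h.2]⟩⟩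
    by_cases hx : x ∈ Set.Icc (0 : ℝ) (1 - y)
    · rw [Set.indicator_of_mem hx, Set.indicator_of_mem (this.2 hx)]
    · rw [Set.indicator_of_notMem hx, Set.indicator_of_notMem (fun h => hx (this.1 h))]
  · rw [Set.indicator_of_notMem hy]
    rw [lintegral_eq_zero_of_ae_eq_zero]
    refine Filter.Eventually.of_forall fun x => ?_
    apply Set.indicator_of_notMem
    rw [mem_T]
    intro h
    exact hy ⟨h.2.1, by linarith [h.1, h.2.2]⟩

theorem lint_Icc (a b : ℝ) (hab : a ≤ b) (f : ℝ → ℝ) (hf : Continuous f)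
    (h0 : ∀ x ∈ Set.Icc a b, 0 ≤ f x) :
    ∫⁻ x in Set.Icc a b, ENNReal.ofReal (f x) = ENNReal.ofReal (∫ x in a..b, f x) := by
  rw [intervalIntegral.integral_of_le hab, ← integral_Icc_eq_integral_Ioc,
    ofReal_integral_eq_lintegral_ofReal]
  · exact hf.continuousOn.integrableOn_Icc
  · exact (ae_restrict_iff' measurableSet_Icc).2 (Filter.Eventually.of_forall h0)

theorem inner_int (s : ℝ) (hs : 0 < s) (n : ℕ) :
    ∫ x in (0 : ℝ)..s, (1 - x / s) ^ n = s / ((n : ℝ) + 1) := by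
  have h := intervalIntegral.integral_comp_div (a := 0) (b := s) (fun x => (1 - x) ^ n) hs.ne'
  rw [h]
  have := beta_int n 0
  simp only [pow_zero, mul_one] at this
  rw [zero_div, div_self hs.ne', this]
  simp [Nat.factorial_succ]
  have : (n.factorial : ℝ) ≠ 0 := by exact_mod_cast Nat.factorial_ne_zero n
  field_simp

theorem J_int (a b : ℕ) : ∫⁻ X, ENNReal.ofReal (1 - X.1 - X.2) ^ a *
      ENNReal.ofReal (X.2 * (1 - X.1 / (1 - X.2))) ^ b ∂μT =
    ENNReal.ofReal (2 / ((a : ℝ) + b + 1) *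
      (((a + 1).factorial : ℝ) * (b.factorial : ℝ) / ((a + b + 2).factorial : ℝ))) := by
  rw [lint_T _ (by fun_prop)]
  have e1 : ∀ y ∈ Set.Ico (0 : ℝ) 1, ∫⁻ x in Set.Icc (0 : ℝ) (1 - y),
      ENNReal.ofReal (1 - (x, y).1 - (x, y).2) ^ a *
      ENNReal.ofReal ((x, y).2 * (1 - (x, y).1 / (1 - (x, y).2))) ^ b
      = ENNReal.ofReal ((1 / ((a : ℝ) + b + 1)) * ((1 - y) ^ (a + 1) * y ^ b)) := by
    intro y hy
    have y1 : 0 < 1 - y := by linarith [hy.2]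
    have y0 := hy.1
    trans ∫⁻ x in Set.Icc (0 : ℝ) (1 - y), ENNReal.ofReal ((1 - y) ^ a * y ^ b * (1 - x / (1 - y)) ^ (a + b))
    · apply setLIntegral_congr_fun measurableSet_Icc
      intro x hx
      have hx1 : x / (1 - y) ≤ 1 := by rw [div_le_one y1]; exact hx.2
      simp only
      rw [← ENNReal.ofReal_pow (by linarith [hx.2]),
        ← ENNReal.ofReal_pow (mul_nonneg y0 (by linarith)),
        ← ENNReal.ofReal_mul (pow_nonneg (by linarith [hx.2]) _)]
      congr 1
      have : 1 - x - y = (1 - y) * (1 - x / (1 - y)) := by field_simp; ring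
      rw [this, mul_pow, mul_pow, pow_add]
      ring
    · rw [lint_Icc _ _ y1.le _ (by fun_prop), intervalIntegral.integral_const_mul, inner_int _ y1]
      · congr 1
        push_cast
        ring
      · intro x hx
        have hx1 : x / (1 - y) ≤ 1 := by rw [div_le_one y1]; exact hx.2
        have : 0 ≤ 1 - x / (1 - y) := by linarith
        positivity
  have e2 : ∫⁻ y in Set.Icc (0 : ℝ) 1, ∫⁻ x in Set.Icc (0 : ℝ) (1 - y),
      ENNReal.ofReal (1 - (x, y).1 - (x, y).2) ^ a *
      ENNReal.ofReal ((x, y).2 * (1 - (x, y).1 / (1 - (x, y).2))) ^ b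
      = ∫⁻ y in Set.Icc (0 : ℝ) 1,
        ENNReal.ofReal ((1 / ((a : ℝ) + b + 1)) * ((1 - y) ^ (a + 1) * y ^ b)) := by
    rw [← setLIntegral_congr (Ico_ae_eq_Icc (μ := volume) (a := (0 : ℝ)) (b := 1)),
      ← setLIntegral_congr (Ico_ae_eq_Icc (μ := volume) (a := (0 : ℝ)) (b := 1))]
    exact setLIntegral_congr_fun measurableSet_Ico e1
  rw [e2, lint_Icc _ _ zero_le_one _ (by fun_prop), intervalIntegral.integral_const_mul, beta_int]
  · rw [show (2 : ENNReal) = ENNReal.ofReal 2 by simp, ← ENNReal.ofReal_mul (by norm_num)]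
    congr 1
    rw [show a + 1 + b + 1 = a + b + 2 by ring]
    ring
  · intro y hy
    have : 0 ≤ 1 - y := by linarith [hy.2]
    have := hy.1
    positivity

instance muT_prob : IsProbabilityMeasure μT := by
  constructor
  have := J_int 0 0
  simpa using this

theorem two_vol_T : 2 * volume T = 1 := by
  have := muT_prob.measure_univ
  simpa [μT] using this

theorem muT_apply_of_subset {s : Set (ℝ × ℝ)} (hs : s ⊆ T) : μT s = 2 * volume s := by
  simp only [μT, Measure.smul_apply, smul_eq_mul]
  rw [Measure.restrict_eq_self _ hs]

theorem muT_null {s : Set (ℝ × ℝ)} (hs : volume s = 0) : μT s = 0 := by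
  simp only [μT, Measure.smul_apply, smul_eq_mul]
  rw [Measure.restrict_le_self.absolutelyContinuous hs, mul_zero]

theorem ae_mem_T : ∀ᵐ X ∂μT, X ∈ T := by
  have : ∀ᵐ X ∂(volume.restrict T), X ∈ T := ae_restrict_mem T_meas
  exact Measure.ae_smul_measure this 2

theorem ae_good : ∀ᵐ X ∂μT, 0 < X.1 ∧ 0 < X.2 ∧ X.1 + X.2 < 1 := by
  have h1 : ∀ᵐ X ∂μT, ¬ (1 * X.1 + 0 * X.2 = 0) := by
    rw [ae_iff]; simp only [not_not]; exact muT_null (line_null 1 0 0 (by simp))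
  have h2 : ∀ᵐ X ∂μT, ¬ (0 * X.1 + 1 * X.2 = 0) := by
    rw [ae_iff]; simp only [not_not]; exact muT_null (line_null 0 1 0 (by simp))
  have h3 : ∀ᵐ X ∂μT, ¬ (1 * X.1 + 1 * X.2 = 1) := by
    rw [ae_iff]; simp only [not_not]; exact muT_null (line_null 1 1 1 (by simp))
  filter_upwards [ae_mem_T, h1, h2, h3] with X hX a1 a2 a3
  rw [mem_T] at hX
  obtain ⟨b1, b2, b3⟩ := hX
  refine ⟨lt_of_le_of_ne b1 ?_, lt_of_le_of_ne b2 ?_, lt_of_le_of_ne b3 ?_⟩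
  · intro h; apply a1; linarith
  · intro h; apply a2; linarith
  · intro h; apply a3; linarith

/-! ### Measurability -/

theorem DD_meas : MeasurableSet {q : (ℝ × ℝ) × (ℝ × ℝ) | q.2 ∈ DD q.1} := by
  have : {q : (ℝ × ℝ) × (ℝ × ℝ) | q.2 ∈ DD q.1} =
    (Prod.snd ⁻¹' T) ∩ {q | q.1.1 * (1 - q.2.2) ≤ q.2.1 * (1 - q.1.2)} := by
    ext q; simp [DD]
  rw [this]
  exact (measurable_snd T_meas).inter (measurableSet_le (by fun_prop) (by fun_prop))

theorem AA_meas : MeasurableSet {q : (ℝ × ℝ) × (ℝ × ℝ) | q.2 ∈ AA q.1} := by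
  have : {q : (ℝ × ℝ) × (ℝ × ℝ) | q.2 ∈ AA q.1} = {q : (ℝ × ℝ) × (ℝ × ℝ) | q.2 ∈ DD q.1} ∩
      {q | q.1.2 * (1 - q.2.1) < q.2.2 * (1 - q.1.1)} := by
    ext q; simp [AA]
  rw [this]
  exact DD_meas.inter (measurableSet_lt (by fun_prop) (by fun_prop))

theorem BB_meas : MeasurableSet {q : (ℝ × ℝ) × (ℝ × ℝ) | q.2 ∈ BB q.1} := by
  have : {q : (ℝ × ℝ) × (ℝ × ℝ) | q.2 ∈ BB q.1} = {q : (ℝ × ℝ) × (ℝ × ℝ) | q.2 ∈ DD q.1} ∩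
      {q | q.2.2 * (1 - q.1.1) ≤ q.1.2 * (1 - q.2.1)} := by
    ext q; simp [BB]
  rw [this]
  exact DD_meas.inter (measurableSet_le (by fun_prop) (by fun_prop))

theorem AC_meas : MeasurableSet {q : (ℝ × ℝ) × (ℝ × ℝ) | q.2 ∈ AC q.1} := by
  have : {q : (ℝ × ℝ) × (ℝ × ℝ) | q.2 ∈ AC q.1} = {q : (ℝ × ℝ) × (ℝ × ℝ) | q.2 ∈ DD q.1} ∩
      {q | q.1.2 * (1 - q.2.1) ≤ q.2.2 * (1 - q.1.1)} := by
    ext q; simp [AC]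
  rw [this]
  exact DD_meas.inter (measurableSet_le (by fun_prop) (by fun_prop))

theorem DD_meas' (X : ℝ × ℝ) : MeasurableSet (DD X) := measurable_prodMk_left (x := X) DD_meas
theorem AA_meas' (X : ℝ × ℝ) : MeasurableSet (AA X) := measurable_prodMk_left (x := X) AA_meas
theorem BB_meas' (X : ℝ × ℝ) : MeasurableSet (BB X) := measurable_prodMk_left (x := X) BB_meas
theorem AC_meas' (X : ℝ × ℝ) : MeasurableSet (AC X) := measurable_prodMk_left (x := X) AC_meas

theorem DD_sub_T (X : ℝ × ℝ) : DD X ⊆ T := fun _ h => h.1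

/-- Normalised area in `ENNReal`. -/
def Vl {ι : Type} (ω : ι → ℝ × ℝ) : ENNReal := 2 * volume (hull (Set.range ω))

theorem hull_mem {ι : Type} [Fintype ι] (ω : ι → ℝ × ℝ) (p : ℝ × ℝ) : p ∈ hull (Set.range ω) ↔
    ∃ w ∈ stdSimplex ℝ (ι ⊕ Bool), ∑ i, w i • (Sum.elim ω (fun b => if b then (1, 0) else (0, 1)) i) = p := by
  classical
  have h1 : Set.range ω ∪ {(1, 0), (0, 1)} =
      Set.range (Sum.elim ω (fun b : Bool => if b then ((1, 0) : ℝ × ℝ) else (0, 1))) := by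
    rw [Set.Sum.elim_range]
    congr 1
    ext x
    simp [or_comm]
  rw [hull, h1]
  have h2 : ∀ v : ι ⊕ Bool → ℝ × ℝ, convexHull ℝ (Set.range v) =
      (Fintype.linearCombination ℝ v) '' stdSimplex ℝ (ι ⊕ Bool) := by
    intro v
    rw [← convexHull_rangle_single_eq_stdSimplex, LinearMap.image_convexHull, ← Set.range_comp]
    congr 2
    ext i <;> simp [Fintype.linearCombination_apply_single]
  rw [h2]
  simp [Fintype.linearCombination_apply]

theorem hull_closed {ι : Type} [Fintype ι] :
    IsClosed {q : (ι → ℝ × ℝ) × (ℝ × ℝ) | q.2 ∈ hull (Set.range q.1)} := by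
  have hc : CompactSpace (stdSimplex ℝ (ι ⊕ Bool)) :=
    isCompact_iff_compactSpace.1 (isCompact_stdSimplex ℝ (ι ⊕ Bool))
  have hcl : IsClosed {r : stdSimplex ℝ (ι ⊕ Bool) × ((ι → ℝ × ℝ) × (ℝ × ℝ)) |
      ∑ i, (r.1 : ι ⊕ Bool → ℝ) i •
        (Sum.elim r.2.1 (fun b => if b then (1, 0) else (0, 1)) i) = r.2.2} := by
    apply isClosed_eq
    · apply continuous_finsetSum
      rintro (i | b) _
      · simp only [Sum.elim_inl]
        have : Continuous fun r : stdSimplex ℝ (ι ⊕ Bool) × ((ι → ℝ × ℝ) × (ℝ × ℝ)) =>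
            (r.1 : ι ⊕ Bool → ℝ) (Sum.inl i) :=
          (continuous_apply _).comp (continuous_subtype_val.comp continuous_fst)
        exact this.smul (by fun_prop)
      · simp only [Sum.elim_inr]
        have : Continuous fun r : stdSimplex ℝ (ι ⊕ Bool) × ((ι → ℝ × ℝ) × (ℝ × ℝ)) =>
            (r.1 : ι ⊕ Bool → ℝ) (Sum.inr b) :=
          (continuous_apply _).comp (continuous_subtype_val.comp continuous_fst)
        exact this.smul continuous_const
    · fun_prop
  have := isClosedMap_snd_of_compactSpace (X := stdSimplex ℝ (ι ⊕ Bool)) _ hcl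
  convert this using 1
  ext q
  simp only [Set.mem_ofPred_eq, hull_mem, Set.mem_image, Prod.exists, exists_eq_right, Subtype.exists]
  constructor
  · rintro ⟨w, hw, h⟩; exact ⟨w, hw, h⟩
  · rintro ⟨w, hw, h⟩; exact ⟨w, hw, h⟩

theorem Vl_meas {ι : Type} [Fintype ι] : Measurable (Vl : (ι → ℝ × ℝ) → ENNReal) := by
  unfold Vl
  exact (measurable_measure_prodMk_left (ν := volume)
    (hull_closed (ι := ι)).measurableSet).const_mul 2

/-! ### One decomposition step -/

theorem AC_vol {z y : ℝ} (hz : z ∈ Set.Ioo (0 : ℝ) 1) (hy : y ∈ Set.Ioo (0 : ℝ) 1) :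
    2 * volume (AC (z * (1 - y), y)) = ENNReal.ofReal ((1 - z) * (1 - y)) := by
  rw [← psi_image hz hy, psi_vol hz hy, mul_left_comm, two_vol_T, mul_one]

theorem cut_null {z y : ℝ} (hy : y ∈ Set.Ioo (0 : ℝ) 1) :
    volume {p : ℝ × ℝ | p.2 * (1 - z * (1 - y)) = y * (1 - p.1)} = 0 := by
  have := line_null y (1 - z * (1 - y)) y (Or.inl hy.1.ne')
  convert this using 2
  ext p
  simp only [Set.mem_ofPred_eq]
  constructor <;> intro h <;> linarith

theorem vol_decomp {z y : ℝ} (hz : z ∈ Set.Ioo (0 : ℝ) 1) (hy : y ∈ Set.Ioo (0 : ℝ) 1)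
    {s t : Set (ℝ × ℝ)} (hs : s ⊆ T) (ht : t ⊆ AC (z * (1 - y), y)) :
    2 * volume (hull (insert (z * (1 - y), y) (phi z y '' s ∪ t))) =
      ENNReal.ofReal ((1 - z) * (1 - y)) + ENNReal.ofReal (y * (1 - z)) * (2 * volume (hull s)) := by
  rw [hull_decomp hz hy hs ht, measure_union₀', mul_add, AC_vol hz hy, phi_vol hz hy, mul_left_comm]
  · exact (AC_meas' _).nullMeasurableSet
  · apply measure_mono_null _ (cut_null (z := z) hy)
    rintro p ⟨h1, h2⟩
    have hB : phi z y '' hull s ⊆ BB (z * (1 - y), y) := by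
      rw [← phi_image hz hy]; exact Set.image_mono (hull_subset_T hs)
    exact le_antisymm (hB h2).2 h1.2

theorem AA_vol {z y : ℝ} (hz : z ∈ Set.Ioo (0 : ℝ) 1) (hy : y ∈ Set.Ioo (0 : ℝ) 1) :
    μT (AA (z * (1 - y), y)) = ENNReal.ofReal ((1 - z) * (1 - y)) := by
  rw [muT_apply_of_subset (fun p hp => hp.1.1), ← AC_vol hz hy]
  congr 1
  apply le_antisymm
  · exact measure_mono fun p hp => ⟨hp.1, hp.2.le⟩
  · have : AC (z * (1 - y), y) ⊆ AA (z * (1 - y), y) ∪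
        {p : ℝ × ℝ | p.2 * (1 - z * (1 - y)) = y * (1 - p.1)} := by
      intro p hp
      rcases lt_or_eq_of_le hp.2 with h | h
      · left; exact ⟨hp.1, h⟩
      · right; exact h.symm
    refine (measure_mono this).trans ((measure_union_le _ _).trans ?_)
    rw [cut_null hy, add_zero]

theorem phi_meas (z y : ℝ) : Measurable (phi z y) := (aff_cont _ _ _ _ _ _).measurable

theorem BB_restrict {z y : ℝ} (hz : z ∈ Set.Ioo (0 : ℝ) 1) (hy : y ∈ Set.Ioo (0 : ℝ) 1) :
    μT.restrict (BB (z * (1 - y), y)) = ENNReal.ofReal (y * (1 - z)) • μT.map (phi z y) := by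
  ext s hs
  rw [Measure.restrict_apply hs, Measure.smul_apply, Measure.map_apply (phi_meas z y) hs,
    muT_apply_of_subset (fun p hp => hp.2.1.1), ← phi_image hz hy]
  have : s ∩ phi z y '' T = phi z y '' (phi z y ⁻¹' s ∩ T) := by
    rw [Set.image_preimage_inter]
  rw [this, phi_vol hz hy, mul_left_comm, smul_eq_mul]
  congr 1
  simp only [μT, Measure.smul_apply, smul_eq_mul]
  rw [Measure.restrict_apply (phi_meas z y hs)]

theorem pi_smul_const {ι : Type} [Fintype ι] (c : ENNReal) (hc : c ≠ ⊤) (ν : Measure (ℝ × ℝ))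
    [IsProbabilityMeasure ν] :
    Measure.pi (fun _ : ι => c • ν) = c ^ Fintype.card ι • Measure.pi (fun _ : ι => ν) := by
  have : IsFiniteMeasure (c • ν) := ν.smul_finite hc
  apply Measure.pi_eq
  intro s _
  rw [Measure.smul_apply, Measure.pi_pi, smul_eq_mul]
  simp [Finset.prod_mul_distrib]

/-- Adding one point. -/
def ins {ι : Type} (X : ℝ × ℝ) (ω : ι → ℝ × ℝ) : Option ι → ℝ × ℝ := fun o => o.elim X ω

theorem ins_range {ι : Type} (X : ℝ × ℝ) (ω : ι → ℝ × ℝ) :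
    Set.range (ins X ω) = insert X (Set.range ω) := by
  ext p
  constructor
  · rintro ⟨_ | i, rfl⟩
    · left; rfl
    · right; exact ⟨i, rfl⟩
  · rintro (rfl | ⟨i, rfl⟩)
    · exact ⟨none, rfl⟩
    · exact ⟨some i, rfl⟩

theorem ins_meas {ι : Type} [Fintype ι] :
    Measurable (fun q : (ℝ × ℝ) × (ι → ℝ × ℝ) => ins q.1 q.2) := by
  rw [measurable_pi_iff]
  rintro (_ | i)
  · exact measurable_fst
  · exact (measurable_pi_apply i).comp measurable_snd

theorem Vl_ins_meas {ι : Type} [Fintype ι] :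
    Measurable (fun q : (ℝ × ℝ) × (ι → ℝ × ℝ) => Vl (ins q.1 q.2)) := Vl_meas.comp ins_meas

theorem Vl_ins {ι : Type} (X : ℝ × ℝ) (ω : ι → ℝ × ℝ) :
    Vl (ins X ω) = 2 * volume (hull (insert X (Set.range ω))) := by
  rw [Vl, ins_range]

theorem card_inv {ι : Type} [Fintype ι] (f : ENNReal → ENNReal) :
    ∫⁻ η : ι → ℝ × ℝ, f (Vl η) ∂(Measure.pi fun _ => μT)
      = ∫⁻ ω, f (Vl ω) ∂P (Fintype.card ι) := by
  have h := measurePreserving_piCongrLeft (fun _ : Fin (Fintype.card ι) => μT) (Fintype.equivFin ι)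
  unfold P
  rw [← h.lintegral_comp_emb (MeasurableEquiv.measurableEmbedding _)]
  apply lintegral_congr
  intro η
  congr 1
  unfold Vl
  congr 3
  ext p
  simp only [Set.mem_range]
  constructor
  · rintro ⟨i, rfl⟩
    exact ⟨Fintype.equivFin ι i, MeasurableEquiv.piCongrLeft_apply_apply _ _ _⟩
  · rintro ⟨j, rfl⟩
    obtain ⟨i, rfl⟩ := (Fintype.equivFin ι).surjective j
    exact ⟨i, (MeasurableEquiv.piCongrLeft_apply_apply (β := fun _ => ℝ × ℝ) (Fintype.equivFin ι) η i).symm⟩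

theorem ae_pi_T {ι : Type} [Fintype ι] : ∀ᵐ η : ι → ℝ × ℝ ∂(Measure.pi fun _ => μT), ∀ i, η i ∈ T := by
  rw [ae_all_iff]
  intro i
  exact (Measure.quasiMeasurePreserving_eval (fun _ : ι => μT) i).ae ae_mem_T

theorem prod_ind {ι : Type} [Fintype ι] (A : Set (ℝ × ℝ)) (η : ι → ℝ × ℝ) :
    ∏ i, A.indicator (1 : ℝ × ℝ → ENNReal) (η i)
      = (Set.univ.pi fun _ : ι => A).indicator (1 : (ι → ℝ × ℝ) → ENNReal) η := by
  by_cases h : ∀ i, η i ∈ A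
  · rw [Set.indicator_of_mem (by simpa using h)]
    apply Finset.prod_eq_one
    intro i _
    rw [Set.indicator_of_mem (h i)]; rfl
  · rw [Set.indicator_of_notMem (by simpa using h)]
    push Not at h
    obtain ⟨i, hi⟩ := h
    exact Finset.prod_eq_zero (Finset.mem_univ i) (Set.indicator_of_notMem hi _)

theorem int_A {ι : Type} [Fintype ι] {A : Set (ℝ × ℝ)} (hA : MeasurableSet A) :
    ∫⁻ η : ι → ℝ × ℝ, ∏ i, A.indicator (1 : ℝ × ℝ → ENNReal) (η i) ∂(Measure.pi fun _ => μT)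
      = μT A ^ Fintype.card ι := by
  simp_rw [prod_ind]
  rw [lintegral_indicator_one (MeasurableSet.univ_pi fun _ => hA), Measure.pi_pi]
  simp

theorem int_B {ι : Type} [Fintype ι] {z y : ℝ} (hz : z ∈ Set.Ioo (0 : ℝ) 1)
    (hy : y ∈ Set.Ioo (0 : ℝ) 1) (k : ℕ) :
    ∫⁻ η : ι → ℝ × ℝ, (∏ i, (BB (z * (1 - y), y)).indicator (1 : ℝ × ℝ → ENNReal) (η i)) *
        Vl (ins (z * (1 - y), y) η) ^ k ∂(Measure.pi fun _ => μT)
      = ENNReal.ofReal (y * (1 - z)) ^ Fintype.card ι *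
        ∫⁻ η : ι → ℝ × ℝ, (ENNReal.ofReal ((1 - z) * (1 - y)) + ENNReal.ofReal (y * (1 - z)) * Vl η) ^ k
          ∂(Measure.pi fun _ => μT) := by
  have hm : Measurable fun η : ι → ℝ × ℝ => Vl (ins (z * (1 - y), y) η) ^ k :=
    (Vl_ins_meas.comp measurable_prodMk_left).pow_const k
  have e1 : ∀ η : ι → ℝ × ℝ, (∏ i, (BB (z * (1 - y), y)).indicator (1 : ℝ × ℝ → ENNReal) (η i)) *
        Vl (ins (z * (1 - y), y) η) ^ k =
        (Set.univ.pi fun _ : ι => BB (z * (1 - y), y)).indicator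
          (fun η => Vl (ins (z * (1 - y), y) η) ^ k) η := by
    intro η
    rw [prod_ind]
    by_cases h : η ∈ (Set.univ.pi fun _ : ι => BB (z * (1 - y), y))
    · rw [Set.indicator_of_mem h, Set.indicator_of_mem h]; simp
    · rw [Set.indicator_of_notMem h, Set.indicator_of_notMem h]; simp
  simp_rw [e1]
  have : IsProbabilityMeasure (μT.map (phi z y)) :=
    Measure.isProbabilityMeasure_map (phi_meas z y).aemeasurable
  rw [lintegral_indicator (MeasurableSet.univ_pi fun _ => BB_meas' _), Measure.restrict_pi_pi,
    BB_restrict hz hy, pi_smul_const _ ENNReal.ofReal_ne_top, lintegral_smul_measure,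
    ← Measure.pi_map_pi (fun _ => (phi_meas z y).aemeasurable), smul_eq_mul, lintegral_map hm]
  · congr 1
    apply lintegral_congr_ae
    filter_upwards [ae_pi_T (ι := ι)] with η hη
    congr 1
    rw [Vl_ins]
    have := vol_decomp hz hy (s := Set.range η) (t := ∅) (by rintro _ ⟨i, rfl⟩; exact hη i)
      (Set.empty_subset _)
    rw [Set.union_empty] at this
    rw [Vl, ← this]
    congr 4
    ext p
    simp
  · exact measurable_pi_iff.2 fun i => (phi_meas z y).comp (measurable_pi_apply i)

theorem split_S {n : ℕ} (k : ℕ) (S : Finset (Fin n)) {z y : ℝ} (hz : z ∈ Set.Ioo (0 : ℝ) 1)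
    (hy : y ∈ Set.Ioo (0 : ℝ) 1) :
    ∫⁻ ω : Fin n → ℝ × ℝ, (∏ i ∈ S, (BB (z * (1 - y), y)).indicator (1 : ℝ × ℝ → ENNReal) (ω i)) *
      (∏ i ∈ Finset.univ \ S, (AA (z * (1 - y), y)).indicator (1 : ℝ × ℝ → ENNReal) (ω i)) *
        Vl (ins (z * (1 - y), y) ω) ^ k ∂P n
      = ENNReal.ofReal ((1 - z) * (1 - y)) ^ (n - S.card) *
        ENNReal.ofReal (y * (1 - z)) ^ S.card *
        ∫⁻ ω, (ENNReal.ofReal ((1 - z) * (1 - y)) + ENNReal.ofReal (y * (1 - z)) * Vl ω) ^ k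
          ∂P S.card := by
  classical
  set X : ℝ × ℝ := (z * (1 - y), y) with hX
  have hmp := measurePreserving_piEquivPiSubtypeProd (fun _ : Fin n => μT) (fun i => i ∈ S)
  rw [P, ← (hmp.symm _).lintegral_comp_emb (MeasurableEquiv.measurableEmbedding _)]
  have key : ∀ q : ({i // i ∈ S} → ℝ × ℝ) × ({i // i ∉ S} → ℝ × ℝ),
      (∏ i ∈ S, (BB X).indicator (1 : ℝ × ℝ → ENNReal)
        ((MeasurableEquiv.piEquivPiSubtypeProd (fun _ => ℝ × ℝ) (fun i => i ∈ S)).symm q i)) *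
      (∏ i ∈ Finset.univ \ S, (AA X).indicator (1 : ℝ × ℝ → ENNReal)
        ((MeasurableEquiv.piEquivPiSubtypeProd (fun _ => ℝ × ℝ) (fun i => i ∈ S)).symm q i)) *
        Vl (ins X ((MeasurableEquiv.piEquivPiSubtypeProd (fun _ => ℝ × ℝ) (fun i => i ∈ S)).symm q)) ^ k
      = ((∏ i, (BB X).indicator (1 : ℝ × ℝ → ENNReal) (q.1 i)) * Vl (ins X q.1) ^ k) *
        ∏ i, (AA X).indicator (1 : ℝ × ℝ → ENNReal) (q.2 i) := by
    rintro ⟨η, ζ⟩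
    set ω := (MeasurableEquiv.piEquivPiSubtypeProd (fun _ => ℝ × ℝ) (fun i => i ∈ S)).symm (η, ζ) with hω
    have h1 : ∀ i : {i // i ∈ S}, ω i = η i := by
      intro i
      simp [hω, MeasurableEquiv.piEquivPiSubtypeProd, Equiv.piEquivPiSubtypeProd, i.2]
    have h2 : ∀ i : {i // i ∉ S}, ω i = ζ i := by
      intro i
      simp [hω, MeasurableEquiv.piEquivPiSubtypeProd, Equiv.piEquivPiSubtypeProd, i.2]
    have p1 : ∏ i ∈ S, (BB X).indicator (1 : ℝ × ℝ → ENNReal) (ω i)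
        = ∏ i, (BB X).indicator (1 : ℝ × ℝ → ENNReal) (η i) := by
      rw [← Finset.prod_coe_sort]
      apply Finset.prod_congr rfl
      intro i _
      rw [← h1 i]
    have p2 : ∏ i ∈ Finset.univ \ S, (AA X).indicator (1 : ℝ × ℝ → ENNReal) (ω i)
        = ∏ i, (AA X).indicator (1 : ℝ × ℝ → ENNReal) (ζ i) := by
      rw [Finset.prod_subtype (p := fun i => i ∉ S) (F := inferInstance) _ (by simp)]
      apply Finset.prod_congr rfl
      intro i _
      rw [← h2 i]
    rw [p1, p2, mul_right_comm]
    by_cases hB : ∀ i, η i ∈ BB X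
    swap
    · push Not at hB
      obtain ⟨i, hi⟩ := hB
      rw [Finset.prod_eq_zero (f := fun i => (BB X).indicator (1 : ℝ × ℝ → ENNReal) (η i))
        (Finset.mem_univ i) (Set.indicator_of_notMem hi _)]
      simp
    by_cases hA : ∀ i, ζ i ∈ AA X
    swap
    · push Not at hA
      obtain ⟨i, hi⟩ := hA
      rw [Finset.prod_eq_zero (f := fun i => (AA X).indicator (1 : ℝ × ℝ → ENNReal) (ζ i))
        (Finset.mem_univ i) (Set.indicator_of_notMem hi _)]
      simp
    congr 3
    have hr : Set.range ω = Set.range η ∪ Set.range ζ := by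
      ext p
      constructor
      · rintro ⟨i, rfl⟩
        by_cases hi : i ∈ S
        · left; exact ⟨⟨i, hi⟩, (h1 ⟨i, hi⟩).symm⟩
        · right; exact ⟨⟨i, hi⟩, (h2 ⟨i, hi⟩).symm⟩
      · rintro (⟨i, rfl⟩ | ⟨i, rfl⟩)
        · exact ⟨i, h1 i⟩
        · exact ⟨i, h2 i⟩
    have hs : phi z y '' (phi z y ⁻¹' (Set.range η) ∩ T) = Set.range η := by
      rw [Set.image_preimage_inter, phi_image hz hy]
      apply Set.inter_eq_left.2
      rintro _ ⟨i, rfl⟩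
      exact hB i
    rw [Vl_ins, Vl_ins, hr, ← hs]
    have d1 := vol_decomp hz hy (s := phi z y ⁻¹' (Set.range η) ∩ T) (t := ∅)
      Set.inter_subset_right (Set.empty_subset _)
    rw [Set.union_empty] at d1
    have d2 := vol_decomp hz hy (s := phi z y ⁻¹' (Set.range η) ∩ T) (t := Set.range ζ)
      Set.inter_subset_right (by rintro _ ⟨i, rfl⟩; exact ⟨(hA i).1, (hA i).2.le⟩)
    rw [d1, d2]
  simp_rw [key]
  have hm1 : Measurable fun η : {i // i ∈ S} → ℝ × ℝ => Vl (ins X η) ^ k :=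
    (Vl_ins_meas.comp measurable_prodMk_left).pow_const k
  have hm2 : ∀ {A : Set (ℝ × ℝ)}, MeasurableSet A → Measurable (A.indicator (1 : ℝ × ℝ → ENNReal)) :=
    fun h => measurable_one.indicator h
  have hm3 : Measurable fun η : {i // i ∈ S} → ℝ × ℝ =>
      ∏ i, (BB X).indicator (1 : ℝ × ℝ → ENNReal) (η i) :=
    Finset.measurable_fun_prod _ fun i _ => (hm2 (BB_meas' X)).comp (measurable_pi_apply i)
  have hm4 : Measurable fun η : {i // i ∉ S} → ℝ × ℝ =>
      ∏ i, (AA X).indicator (1 : ℝ × ℝ → ENNReal) (η i) :=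
    Finset.measurable_fun_prod _ fun i _ => (hm2 (AA_meas' X)).comp (measurable_pi_apply i)
  have hm5 : Measurable fun η : {i // i ∈ S} → ℝ × ℝ =>
      (∏ i, (BB X).indicator (1 : ℝ × ℝ → ENNReal) (η i)) * Vl (ins X η) ^ k := hm3.mul hm1
  have hIB := int_B (ι := {i // i ∈ S}) hz hy k
  have hIA := AA_vol hz hy
  rw [← hX] at hIA hIB
  rw [card_inv (fun v => (ENNReal.ofReal ((1 - z) * (1 - y)) +
      ENNReal.ofReal (y * (1 - z)) * v) ^ k)] at hIB
  have c1 : Fintype.card {i // i ∈ S} = S.card := by simp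
  rw [c1] at hIB
  rw [lintegral_prod_mul hm5.aemeasurable hm4.aemeasurable, int_A (AA_meas' X), hIA]
  refine (congrArg (· * _) (Eq.trans ?_ hIB)).trans ?_
  · congr!
  have c2 : Fintype.card {i // i ∉ S} = n - S.card := by
    rw [Fintype.card_subtype_compl]; simp
  rw [c2]
  ring


/-! ### The recursion for the moments -/

instance P_prob (n : ℕ) : IsProbabilityMeasure (P n) := by unfold P; infer_instance

/-- Moments in `ENNReal`. -/
def Lm (n k : ℕ) : ENNReal := ∫⁻ ω, Vl ω ^ k ∂P n

theorem expand_int (m k : ℕ) (a d : ENNReal) :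
    ∫⁻ ω, (a + d * Vl ω) ^ k ∂P m =
      ∑ j ∈ Finset.range (k + 1), (k.choose j : ENNReal) * a ^ (k - j) * d ^ j * Lm m j := by
  have : ∀ ω : Fin m → ℝ × ℝ, (a + d * Vl ω) ^ k =
      ∑ j ∈ Finset.range (k + 1), ((k.choose j : ENNReal) * a ^ (k - j) * d ^ j) * Vl ω ^ j := by
    intro ω
    rw [add_comm, add_pow]
    apply Finset.sum_congr rfl
    intro j _
    rw [mul_pow]
    ring
  simp_rw [this]
  rw [lintegral_finsetSum _ (fun j _ => (Vl_meas.pow_const j).const_mul _)]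
  apply Finset.sum_congr rfl
  intro j _
  rw [lintegral_const_mul _ (Vl_meas.pow_const j), Lm]

theorem inner_eq {n : ℕ} (k : ℕ) {X : ℝ × ℝ} (h1 : 0 < X.1) (h2 : 0 < X.2) (h3 : X.1 + X.2 < 1) :
    ∫⁻ ω : Fin n → ℝ × ℝ, (∏ i, (DD X).indicator (1 : ℝ × ℝ → ENNReal) (ω i)) *
        Vl (ins X ω) ^ k ∂P n =
      ∑ m ∈ Finset.range (n + 1), ∑ j ∈ Finset.range (k + 1),
        ((n.choose m : ENNReal) * (k.choose j : ENNReal) * Lm m j) *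
          (ENNReal.ofReal (1 - X.1 - X.2) ^ (n - m + (k - j)) *
            ENNReal.ofReal (X.2 * (1 - X.1 / (1 - X.2))) ^ (m + j)) := by
  have hy1 : 0 < 1 - X.2 := by linarith
  obtain ⟨z, hzd⟩ : ∃ z, z = X.1 / (1 - X.2) := ⟨_, rfl⟩
  obtain ⟨y, hyd⟩ : ∃ y, y = X.2 := ⟨_, rfl⟩
  have hz : z ∈ Set.Ioo (0 : ℝ) 1 := by
    rw [hzd]
    exact ⟨div_pos h1 hy1, (div_lt_one hy1).2 (by linarith)⟩
  have hy : y ∈ Set.Ioo (0 : ℝ) 1 := by rw [hyd]; exact ⟨h2, by linarith⟩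
  have e1 : X.1 = z * (1 - y) := by rw [hzd, hyd]; field_simp
  have hX : X = (z * (1 - y), y) := Prod.ext e1 hyd.symm
  have e2 : 1 - X.1 - X.2 = (1 - z) * (1 - y) := by rw [e1, ← hyd]; ring
  rw [e2, ← hzd, ← hyd]
  rw [hX]
  have hDD : ∀ p : ℝ × ℝ, (DD (z * (1 - y), y)).indicator (1 : ℝ × ℝ → ENNReal) p =
      (BB (z * (1 - y), y)).indicator (1 : ℝ × ℝ → ENNReal) p +
      (AA (z * (1 - y), y)).indicator (1 : ℝ × ℝ → ENNReal) p := by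
    intro p
    by_cases hD : p ∈ DD (z * (1 - y), y)
    · by_cases hB : p.2 * (1 - z * (1 - y)) ≤ y * (1 - p.1)
      · have hb : p ∈ BB (z * (1 - y), y) := ⟨hD, hB⟩
        have ha : p ∉ AA (z * (1 - y), y) := fun h => absurd h.2 (not_lt.2 hB)
        simp [hD, hb, ha]
      · have hb : p ∉ BB (z * (1 - y), y) := fun h => hB h.2
        have ha : p ∈ AA (z * (1 - y), y) := ⟨hD, not_le.1 hB⟩
        simp [hD, hb, ha]
    · have hb : p ∉ BB (z * (1 - y), y) := fun h => hD h.1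
      have ha : p ∉ AA (z * (1 - y), y) := fun h => hD h.1
      simp [hD, hb, ha]
  simp_rw [hDD, Finset.prod_add, Finset.sum_mul]
  have hm2 : ∀ {A : Set (ℝ × ℝ)}, MeasurableSet A → Measurable (A.indicator (1 : ℝ × ℝ → ENNReal)) :=
    fun h => measurable_one.indicator h
  rw [lintegral_finsetSum]
  · simp_rw [split_S k _ hz hy, expand_int]
    rw [Finset.sum_powerset_apply_card (fun m => ENNReal.ofReal ((1 - z) * (1 - y)) ^ (n - m) *
        ENNReal.ofReal (y * (1 - z)) ^ m * ∑ j ∈ Finset.range (k + 1), (k.choose j : ENNReal) *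
          ENNReal.ofReal ((1 - z) * (1 - y)) ^ (k - j) * ENNReal.ofReal (y * (1 - z)) ^ j * Lm m j)]
    rw [Finset.card_univ, Fintype.card_fin]
    apply Finset.sum_congr rfl
    intro m _
    rw [nsmul_eq_mul, Finset.mul_sum, Finset.mul_sum]
    apply Finset.sum_congr rfl
    intro j _
    rw [pow_add, pow_add]
    generalize ENNReal.ofReal ((1 - z) * (1 - y)) = a
    generalize ENNReal.ofReal (y * (1 - z)) = d
    ring
  · intro S _
    refine Measurable.mul (Measurable.mul ?_ ?_) ?_
    · exact Finset.measurable_fun_prod _ fun i _ => (hm2 (BB_meas' _)).comp (measurable_pi_apply i)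
    · exact Finset.measurable_fun_prod _ fun i _ => (hm2 (AA_meas' _)).comp (measurable_pi_apply i)
    · exact (Vl_ins_meas.comp measurable_prodMk_left).pow_const k

theorem no_tie (n : ℕ) : ∀ᵐ ω ∂P (n + 1), ∀ (i : Fin (n + 1)) (j : Fin n),
    (ω i).1 * (1 - (ω (i.succAbove j)).2) ≠ (ω (i.succAbove j)).1 * (1 - (ω i).2) := by
  rw [ae_all_iff]
  intro i
  rw [ae_all_iff]
  intro j
  have h := (measurePreserving_piFinSuccAbove (fun _ : Fin (n + 1) => μT) i).quasiMeasurePreserving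
  have : ∀ᵐ q ∂(μT.prod (Measure.pi fun _ : Fin n => μT)),
      q.1.1 * (1 - (q.2 j).2) ≠ (q.2 j).1 * (1 - q.1.2) := by
    rw [Measure.ae_prod_iff_ae_ae]
    · filter_upwards [ae_good] with X hX
      have hl : ∀ᵐ p ∂μT, X.1 * (1 - p.2) ≠ p.1 * (1 - X.2) := by
        rw [ae_iff]
        apply muT_null
        refine measure_mono_null ?_ (line_null (1 - X.2) X.1 X.1 (Or.inr hX.1.ne'))
        intro p hp
        simp only [Set.mem_ofPred_eq, not_not] at hp ⊢
        linarith
      exact (Measure.quasiMeasurePreserving_eval (fun _ : Fin n => μT) j).ae hl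
    · apply MeasurableSet.compl
      apply measurableSet_eq_fun <;> fun_prop
  exact h.ae this

theorem sum_ind (n : ℕ) : ∀ᵐ ω ∂P (n + 1), ∑ i : Fin (n + 1), ∏ j : Fin n,
    (DD (ω i)).indicator (1 : ℝ × ℝ → ENNReal) (ω (i.succAbove j)) = 1 := by
  have hg : ∀ᵐ ω ∂P (n + 1), ∀ i, 0 < (ω i).1 ∧ 0 < (ω i).2 ∧ (ω i).1 + (ω i).2 < 1 := by
    rw [ae_all_iff]
    intro i
    exact (Measure.quasiMeasurePreserving_eval (fun _ : Fin (n + 1) => μT) i).ae ae_good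
  filter_upwards [no_tie n, hg, ae_pi_T (ι := Fin (n + 1))] with ω ht hg hT
  have hpos : ∀ i, 0 < 1 - (ω i).2 := fun i => by linarith [(hg i).1, (hg i).2.2]
  obtain ⟨i0, hi0⟩ := Finite.exists_min (fun i => (ω i).1 / (1 - (ω i).2))
  have hle : ∀ i, (ω i0).1 * (1 - (ω i).2) ≤ (ω i).1 * (1 - (ω i0).2) := by
    intro i
    exact (div_le_div_iff₀ (hpos _) (hpos _)).1 (hi0 i)
  rw [Finset.sum_eq_single i0]
  · apply Finset.prod_eq_one
    intro j _
    have hmem : ω (i0.succAbove j) ∈ DD (ω i0) := ⟨hT _, hle _⟩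
    rw [Set.indicator_of_mem hmem]; rfl
  · intro i _ hi
    obtain ⟨j, hj⟩ := Fin.exists_succAbove_eq hi.symm
    apply Finset.prod_eq_zero (Finset.mem_univ j)
    apply Set.indicator_of_notMem
    intro hmem
    apply ht i j
    apply le_antisymm hmem.2
    rw [hj]
    exact hle i
  · intro h; exact absurd (Finset.mem_univ _) h

theorem Lm_rec (n k : ℕ) : Lm (n + 1) k = ((n : ENNReal) + 1) *
    ∑ m ∈ Finset.range (n + 1), ∑ j ∈ Finset.range (k + 1),
      ((n.choose m : ENNReal) * (k.choose j : ENNReal) * Lm m j) *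
        ENNReal.ofReal (2 / (((n - m + (k - j) : ℕ) : ℝ) + ((m + j : ℕ) : ℝ) + 1) *
          (((n - m + (k - j) + 1).factorial : ℝ) * ((m + j).factorial : ℝ) /
            ((n - m + (k - j) + (m + j) + 2).factorial : ℝ))) := by
  have hm2 : Measurable fun q : (ℝ × ℝ) × (ℝ × ℝ) => (DD q.1).indicator (1 : ℝ × ℝ → ENNReal) q.2 := by
    have : (fun q : (ℝ × ℝ) × (ℝ × ℝ) => (DD q.1).indicator (1 : ℝ × ℝ → ENNReal) q.2) =
        {q : (ℝ × ℝ) × (ℝ × ℝ) | q.2 ∈ DD q.1}.indicator 1 := by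
      funext q
      by_cases h : q.2 ∈ DD q.1
      · rw [Set.indicator_of_mem h, Set.indicator_of_mem (by exact h)]; rfl
      · rw [Set.indicator_of_notMem h, Set.indicator_of_notMem (by exact h)]
    rw [this]
    exact measurable_one.indicator DD_meas
  have hF : Measurable fun q : (ℝ × ℝ) × (Fin n → ℝ × ℝ) =>
      (∏ j, (DD q.1).indicator (1 : ℝ × ℝ → ENNReal) (q.2 j)) * Vl (ins q.1 q.2) ^ k := by
    refine Measurable.mul ?_ (Vl_ins_meas.pow_const k)
    refine Finset.measurable_fun_prod _ fun i _ => ?_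
    exact hm2.comp (measurable_fst.prodMk ((measurable_pi_apply i).comp measurable_snd))
  have hcoord : ∀ (i : Fin (n + 1)) (ω : Fin (n + 1) → ℝ × ℝ),
      (∏ j : Fin n, (DD (ω i)).indicator (1 : ℝ × ℝ → ENNReal) (ω (i.succAbove j))) * Vl ω ^ k =
      (fun q : (ℝ × ℝ) × (Fin n → ℝ × ℝ) =>
      (∏ j, (DD q.1).indicator (1 : ℝ × ℝ → ENNReal) (q.2 j)) * Vl (ins q.1 q.2) ^ k)
        (MeasurableEquiv.piFinSuccAbove (fun _ => ℝ × ℝ) i ω) := by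
    intro i ω
    have hV : Vl ω = Vl (ins (ω i) (fun j => ω (i.succAbove j))) := by
      rw [Vl_ins, Vl]
      congr 3
      ext p
      constructor
      · rintro ⟨j, rfl⟩
        rcases eq_or_ne j i with rfl | h
        · left; rfl
        · obtain ⟨j', rfl⟩ := Fin.exists_succAbove_eq h
          right; exact ⟨j', rfl⟩
      · rintro (rfl | ⟨j, rfl⟩)
        · exact ⟨i, rfl⟩
        · exact ⟨i.succAbove j, rfl⟩
    rw [hV]
    rfl
  have hterm : ∀ i : Fin (n + 1), ∫⁻ ω, (∏ j : Fin n,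
      (DD (ω i)).indicator (1 : ℝ × ℝ → ENNReal) (ω (i.succAbove j))) * Vl ω ^ k ∂P (n + 1) =
      ∑ m ∈ Finset.range (n + 1), ∑ j ∈ Finset.range (k + 1),
      ((n.choose m : ENNReal) * (k.choose j : ENNReal) * Lm m j) *
        ENNReal.ofReal (2 / (((n - m + (k - j) : ℕ) : ℝ) + ((m + j : ℕ) : ℝ) + 1) *
          (((n - m + (k - j) + 1).factorial : ℝ) * ((m + j).factorial : ℝ) /
            ((n - m + (k - j) + (m + j) + 2).factorial : ℝ))) := by
    intro i
    simp_rw [hcoord i]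
    rw [P, (measurePreserving_piFinSuccAbove (fun _ : Fin (n + 1) => μT) i).lintegral_comp hF,
      lintegral_prod _ hF.aemeasurable]
    have hin : ∀ᵐ X ∂μT, ∫⁻ ω : Fin n → ℝ × ℝ, (∏ i, (DD X).indicator (1 : ℝ × ℝ → ENNReal) (ω i)) *
        Vl (ins X ω) ^ k ∂(Measure.pi fun _ => μT) =
      ∑ m ∈ Finset.range (n + 1), ∑ j ∈ Finset.range (k + 1),
        ((n.choose m : ENNReal) * (k.choose j : ENNReal) * Lm m j) *
          (ENNReal.ofReal (1 - X.1 - X.2) ^ (n - m + (k - j)) *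
            ENNReal.ofReal (X.2 * (1 - X.1 / (1 - X.2))) ^ (m + j)) := by
      filter_upwards [ae_good] with X hX
      exact inner_eq k hX.1 hX.2.1 hX.2.2
    rw [lintegral_congr_ae hin, lintegral_finsetSum _ (by intros; fun_prop)]
    apply Finset.sum_congr rfl
    intro m _
    rw [lintegral_finsetSum _ (by intros; fun_prop)]
    apply Finset.sum_congr rfl
    intro j _
    rw [lintegral_const_mul _ (by fun_prop), J_int]
  have hone : Lm (n + 1) k = ∫⁻ ω, ∑ i : Fin (n + 1), (∏ j : Fin n,
      (DD (ω i)).indicator (1 : ℝ × ℝ → ENNReal) (ω (i.succAbove j))) * Vl ω ^ k ∂P (n + 1) := by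
    rw [Lm]
    apply lintegral_congr_ae
    filter_upwards [sum_ind n] with ω h
    rw [← Finset.sum_mul, h, one_mul]
  rw [hone, lintegral_finsetSum]
  · simp_rw [hterm]
    rw [Finset.sum_const, Finset.card_univ, Fintype.card_fin, nsmul_eq_mul]
    push_cast
    rfl
  · intro i _
    simp_rw [hcoord i]
    exact hF.comp (MeasurableEquiv.measurable _)

theorem Vl_le_one (n : ℕ) : ∀ᵐ ω ∂P n, Vl ω ≤ 1 := by
  filter_upwards [ae_pi_T (ι := Fin n)] with ω hω
  rw [Vl, ← two_vol_T]
  gcongr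
  exact hull_subset_T (by rintro _ ⟨i, rfl⟩; exact hω i)

theorem Lm_ne_top (n k : ℕ) : Lm n k ≠ ⊤ := by
  have : Lm n k ≤ ∫⁻ _, 1 ∂P n := by
    apply lintegral_mono_ae
    filter_upwards [Vl_le_one n] with ω h
    exact pow_le_one₀ (zero_le) h
  rw [lintegral_one, measure_univ] at this
  exact ne_top_of_le_ne_top ENNReal.one_ne_top this

theorem int_V (n k : ℕ) : ∫ ω, (V n ω) ^ k ∂P n = (Lm n k).toReal := by
  rw [Lm, ← integral_toReal (Vl_meas.pow_const k).aemeasurable]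
  · apply integral_congr_ae
    refine Filter.Eventually.of_forall fun ω => ?_
    simp only [ENNReal.toReal_pow]
    congr 1
    rw [V, Vl, ENNReal.toReal_mul]
    rfl
  · filter_upwards [Vl_le_one n] with ω h
    exact (pow_le_one₀ (zero_le) h).trans_lt ENNReal.one_lt_top

theorem Lm_zero (k : ℕ) : Lm 0 k = if k = 0 then 1 else 0 := by
  have hV : ∀ ω : Fin 0 → ℝ × ℝ, Vl ω = 0 := by
    intro ω
    rw [Vl, mul_eq_zero]
    right
    refine measure_mono_null ?_ (line_null 1 1 1 (by simp))
    rw [hull]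
    apply convexHull_min
    · intro p hp
      simp only [Set.range_eq_empty, Set.empty_union] at hp
      rcases hp with rfl | rfl <;> simp
    · intro p hp q hq a b _ _ hab
      simp only [Set.mem_ofPred_eq, Prod.fst_add, Prod.snd_add, Prod.smul_fst, Prod.smul_snd,
        smul_eq_mul] at hp hq ⊢
      linear_combination a * hp + b * hq + hab
  rw [Lm]
  simp_rw [hV]
  rw [lintegral_const, measure_univ, mul_one]
  split_ifs with h
  · rw [h, pow_zero]
  · exact zero_pow h

theorem Lm_real_rec (n k : ℕ) : (Lm (n + 1) k).toReal = ((n:ℝ)+1) * ∑ m ∈ Finset.range (n+1),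
    ∑ j ∈ Finset.range (k+1), (n.choose m:ℝ)*(k.choose j:ℝ)* (Lm m j).toReal *
      (2/((n:ℝ)+k+1) * (((n-m+(k-j)+1).factorial:ℝ)*((m+j).factorial:ℝ)/((n+k+2).factorial:ℝ))) := by
  rw [Lm_rec, ENNReal.toReal_mul, ENNReal.toReal_sum]
  · congr 1
    apply Finset.sum_congr rfl
    intro m hm
    rw [ENNReal.toReal_sum]
    · apply Finset.sum_congr rfl
      intro j hj
      rw [Finset.mem_range] at hm hj
      have e : n - m + (k - j) + (m + j) = n + k := by omega
      have e' : ((n - m + (k - j) : ℕ) : ℝ) + ((m + j : ℕ) : ℝ) = (n : ℝ) + k := by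
        rw [← Nat.cast_add, e, Nat.cast_add]
      rw [ENNReal.toReal_mul, ENNReal.toReal_mul, ENNReal.toReal_mul, ENNReal.toReal_natCast,
        ENNReal.toReal_natCast, ENNReal.toReal_ofReal (by positivity), e, e']
    · intro j _
      exact ENNReal.mul_ne_top (ENNReal.mul_ne_top (ENNReal.mul_ne_top (ENNReal.natCast_ne_top _)
        (ENNReal.natCast_ne_top _)) (Lm_ne_top _ _)) ENNReal.ofReal_ne_top
  · intro m _
    rw [ENNReal.sum_ne_top]
    intro j _
    exact ENNReal.mul_ne_top (ENNReal.mul_ne_top (ENNReal.mul_ne_top (ENNReal.natCast_ne_top _)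
      (ENNReal.natCast_ne_top _)) (Lm_ne_top _ _)) ENNReal.ofReal_ne_top

/-- exact moment formula
`C(n+k,k) E[V_n^k] = Σ_{i=1}^n Σ_{ℓ=i}^{n+k} (-1)^{ℓ+i} C(n+k-i,k) C(n+k,ℓ) c(i,ℓ)`. -/
theorem stmt12 (n k : ℕ) (hn : 1 ≤ n) :
    ((n + k).choose k : ℝ) * ∫ ω, (V n ω) ^ k ∂ P n
      = ∑ i ∈ Finset.Icc 1 n, ∑ l ∈ Finset.Icc i (n + k),
          (-1 : ℝ) ^ (l + i) * ((n + k - i).choose k : ℝ) * ((n + k).choose l : ℝ) * c i l := by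
  rw [int_V, ← RR_eq n k hn]
  refine alg_main (fun n k => (Lm n k).toReal) ?_ Lm_real_rec n k
  intro k
  simp only [Lm_zero]
  split_ifs <;> simp

end
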